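/- Theorem A: Assume (H1), (H2) and (H3). Then the set 𝔠_P = {x ∈ X : ω(x) is a linearly stable cycle} is prevalent in X, i.e., X ∖ 𝔠_P is shy. -/

import Mathlib

open Set Topology Filter MeasureTheory Function

universe u

variable {E : Type u} [NormedAddCommGroup E] [NormedSpace ℝ E]
  [MeasurableSpace E] [BorelSpace E]

/-- `x ≤ y` in the order induced by the cone `K`. -/
def coneLE (K : Set E) (x y : E) : Prop := y - x ∈ K

/-- `x < y` in the order induced by the cone `K`. -/
def coneLT (K : Set E) (x y : E) : Prop := coneLE K x y ∧ x ≠ y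

/-- `x ≪ y` (strong ordering) induced by the cone `K`. -/
def coneLL (K : Set E) (x y : E) : Prop := y - x ∈ interior K

/-- `K` is a closed convex cone inducing a partial order. -/
def IsConeOrder (K : Set E) : Prop :=
  IsClosed K ∧ Convex ℝ K ∧
  (∀ x ∈ K, ∀ α : ℝ, 0 < α → α • x ∈ K) ∧
  (∀ x ∈ K, ∀ y ∈ K, x + y ∈ K) ∧
  K ∩ (-K) = {0}

/-- Closed order interval `[a,b]`. -/
def ordCC (K : Set E) (a b : E) : Set E := {z | coneLE K a z ∧ coneLE K z b}

/-- Open order interval `[[a,b]]`. -/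
def ordOO (K : Set E) (a b : E) : Set E := {z | coneLL K a z ∧ coneLL K z b}

/-- `X` is order-convex. -/
def OrderConvexSet (K X : Set E) : Prop :=
  ∀ a ∈ X, ∀ b ∈ X, coneLT K a b → ordCC K a b ⊆ X

/-- `F` is strongly monotone with respect to the cone `K`. -/
def StronglyMonotoneMap (K : Set E) (F : E → E) : Prop :=
  ∀ x y : E, coneLT K x y → coneLL K (F x) (F y)

/-- The semi-orbit `O⁺(x)` of `x` under `F`. -/
def semiOrbit (F : E → E) (x : E) : Set E := {y | ∃ n : ℕ, y = F^[n] x}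

/-- The ω-limit set of `x` under `F`. -/
def omegaSet (F : E → E) (x : E) : Set E := ⋂ k : ℕ, closure (semiOrbit F (F^[k] x))

/-- `F` is ω-compact in `S ⊆ X`. -/
def OmegaCompactIn (F : E → E) (X S : Set E) : Prop :=
  (∀ x ∈ S, IsCompact (closure (semiOrbit F x)) ∧ closure (semiOrbit F x) ⊆ X) ∧
  IsCompact (closure (⋃ x ∈ S, omegaSet F x)) ∧ closure (⋃ x ∈ S, omegaSet F x) ⊆ X

/-- Hypothesis (H2): ω-compactness in every closed order interval of `X`. -/
def OmegaCompactIntervals (K : Set E) (F : E → E) (X : Set E) : Prop :=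
  ∀ a ∈ X, ∀ b ∈ X, coneLE K a b → OmegaCompactIn F X (ordCC K a b)

/-- The upper ω-limit set `ω₊(x)`. -/
def omegaPlus (K : Set E) (F : E → E) (X : Set E) (x : E) : Set E :=
  ⋂ u ∈ {u ∈ X | coneLL K x u},
    closure (⋃ y ∈ {y ∈ X | coneLT K x y ∧ coneLE K y u}, omegaSet F y)

/-- The lower ω-limit set `ω₋(x)`. -/
def omegaMinus (K : Set E) (F : E → E) (X : Set E) (x : E) : Set E :=
  ⋂ u ∈ {u ∈ X | coneLL K u x},
    closure (⋃ y ∈ {y ∈ X | coneLT K y x ∧ coneLE K u y}, omegaSet F y)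

/-- The upper ω-unstable set `U₊`. -/
def Uplus (K : Set E) (F : E → E) (X : Set E) : Set E :=
  {x ∈ X | omegaPlus K F X x ≠ omegaSet F x}

/-- The lower ω-unstable set `U₋`. -/
def Uminus (K : Set E) (F : E → E) (X : Set E) : Set E :=
  {x ∈ X | omegaMinus K F X x ≠ omegaSet F x}

/-- `q` is a periodic point of `F` with minimal period `p ≥ 1`. -/
def IsMinPeriodicPt (F : E → E) (p : ℕ) (q : E) : Prop :=
  1 ≤ p ∧ F^[p] q = q ∧ ∀ l : ℕ, 1 ≤ l → l < p → F^[l] q ≠ q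

/-- `C` is a linearly stable cycle of `F`: the (semi-)orbit of a periodic point of some
minimal period `p` such that the spectral radius of the derivative of `F^[p]` at every
point of the cycle is at most `1`. -/
def IsLinearlyStableCycle (F : E → E) (C : Set E) : Prop :=
  ∃ (q : E) (p : ℕ), IsMinPeriodicPt F p q ∧ C = semiOrbit F q ∧
    ∀ z ∈ semiOrbit F q, ∃ L : E →L[ℝ] E,
      HasFDerivAt (F^[p]) L z ∧ spectralRadius ℝ L ≤ 1

/-- Hypothesis (H3): `F` is C¹ and each derivative is a compact strongly positive operator. -/
def SmoothStronglyPositive (K : Set E) (F : E → E) : Prop :=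
  ∃ F' : E → (E →L[ℝ] E), Continuous F' ∧ (∀ x : E, HasFDerivAt F (F' x) x) ∧
    (∀ x : E, IsCompactOperator ⇑(F' x)) ∧
    ∀ x v : E, coneLT K 0 v → coneLL K 0 (F' x v)

/-- A Borel set `W` is shy: there is a nonzero compactly supported Borel measure `μ` with
`μ (x + W) = 0` for every `x`. -/
def IsShyBorel (W : Set E) : Prop :=
  MeasurableSet W ∧ ∃ μ : Measure E, μ ≠ 0 ∧
    (∃ Q : Set E, IsCompact Q ∧ μ Qᶜ = 0) ∧
    ∀ x : E, μ ((fun y => y - x) ⁻¹' W) = 0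

/-- A set is shy if it is contained in a shy Borel set. -/
def IsShy (W : Set E) : Prop := ∃ W' : Set E, W ⊆ W' ∧ IsShyBorel W'

/-- `S` is prevalent in `A` if `A \ S` is shy. -/
def PrevalentIn (S A : Set E) : Prop := IsShy (A \ S)

/-- An order decomposition `(A, B')` of `X`: both nonempty, relatively closed in `X`,
`A` lower closed, `B'` upper closed, `A ∪ B' = X` and `int (A ∩ B') = ∅`. -/
def IsOrderDecomp (K X A B' : Set E) : Prop :=
  A.Nonempty ∧ B'.Nonempty ∧ A ⊆ X ∧ B' ⊆ X ∧
  closure A ∩ X ⊆ A ∧ closure B' ∩ X ⊆ B' ∧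
  (∀ a ∈ A, ∀ z ∈ X, coneLE K z a → z ∈ A) ∧
  (∀ b ∈ B', ∀ z ∈ X, coneLE K b z → z ∈ B') ∧
  A ∪ B' = X ∧ interior (A ∩ B') = ∅

/-- An invariant order decomposition of `X`. -/
def IsInvOrderDecomp (K X : Set E) (F : E → E) (A B' : Set E) : Prop :=
  IsOrderDecomp K X A B' ∧ F '' A ⊆ A ∧ F '' B' ⊆ B'

/-- A set is unordered if it contains no two points `x < y`. -/
def UnorderedSet (K S : Set E) : Prop := ∀ x ∈ S, ∀ y ∈ S, ¬ coneLT K x y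

/-- An invariant order resolution of `X`. -/
def IsInvOrderResolution (K X : Set E) (F : E → E) (Γ : Set (Set E × Set E)) : Prop :=
  (∀ p ∈ Γ, IsInvOrderDecomp K X F p.1 p.2) ∧
  (∀ p ∈ Γ, ∀ q ∈ Γ, p.1 ⊆ q.1 ∨ q.1 ⊆ p.1) ∧
  (∀ x ∈ X, UnorderedSet K (semiOrbit F x) → ∃ p ∈ Γ, semiOrbit F x ⊆ p.1 ∩ p.2)

/-- Hypothesis (H4): the group `G` acts on `X` by an increasing, jointly continuous
action whose homeomorphisms commute with `F`. -/
def GroupActsOn {G : Type*} [Group G] [TopologicalSpace G]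
    (K X : Set E) (F : E → E) (act : G → E → E) : Prop :=
  ContinuousOn (fun p : G × E => act p.1 p.2) (Set.univ ×ˢ X) ∧
  (∀ g : G, Set.MapsTo (act g) X X) ∧
  (∀ x ∈ X, act (1 : G) x = x) ∧
  (∀ g h : G, ∀ x ∈ X, act (g * h) x = act g (act h x)) ∧
  (∀ g : G, ∀ x ∈ X, ∀ y ∈ X, coneLE K x y → coneLE K (act g x) (act g y)) ∧
  (∀ g : G, ∀ x ∈ X, act g (F x) = F (act g x))

/-- A set `S` is `G`-symmetric if every point of `S` is fixed by every group element. -/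
def GSymmetricSet {G : Type*} (act : G → E → E) (S : Set E) : Prop :=
  ∀ z ∈ S, ∀ g : G, act g z = z

section AbstractCone

set_option linter.unusedSectionVars false

variable {V : Type*} [NormedAddCommGroup V] [NormedSpace ℝ V] [PartialOrder V]
  [IsOrderedAddMonoid V] [IsOrderedModule ℝ V] [OrderClosedTopology V]

lemma ac_unit {e : V} (he : e ∈ interior (Ici (0:V))) :
    ∃ b : ℝ, 0 < b ∧ ∀ v : V, v ≤ (b * ‖v‖) • e := by
  rw [mem_interior_iff_mem_nhds, Metric.mem_nhds_iff] at he
  obtain ⟨r, hr, hball⟩ := he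
  refine ⟨2 / r, by positivity, fun v => ?_⟩
  by_cases hv : v = 0
  · simp [hv]
  have hn : 0 < ‖v‖ := norm_pos_iff.mpr hv
  have h1 : e - (r / (2 * ‖v‖)) • v ∈ Metric.ball e r := by
    rw [Metric.mem_ball, dist_eq_norm]
    have : e - (r / (2 * ‖v‖)) • v - e = -((r / (2 * ‖v‖)) • v) := by abel
    rw [this, norm_neg, norm_smul, Real.norm_of_nonneg (by positivity)]
    have : r / (2 * ‖v‖) * ‖v‖ = r / 2 := by field_simp
    rw [this]; linarith
  have h2 : (0:V) ≤ e - (r / (2 * ‖v‖)) • v := hball h1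
  have h3 : (0:V) ≤ (2 / r * ‖v‖) • (e - (r / (2 * ‖v‖)) • v) :=
    smul_nonneg (by positivity) h2
  rw [smul_sub, smul_smul] at h3
  have : 2 / r * ‖v‖ * (r / (2 * ‖v‖)) = 1 := by field_simp
  rw [this, one_smul] at h3
  exact sub_nonneg.mp h3

lemma ac_le {e : V} (he0 : 0 ≤ e) (hne : e ≠ 0) {α β : ℝ} (h : α • e ≤ β • e) : α ≤ β := by
  by_contra hlt
  push Not at hlt
  have h1 : (α - β) • e ≤ 0 := by rw [sub_smul]; exact sub_nonpos.mpr h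
  have hpos : 0 < α - β := sub_pos.mpr hlt
  have h2 : (α - β)⁻¹ • ((α - β) • e) ≤ (α - β)⁻¹ • (0:V) :=
    smul_le_smul_of_nonneg_left h1 (by positivity)
  rw [smul_smul, inv_mul_cancel₀ hpos.ne', one_smul, smul_zero] at h2
  exact hne (le_antisymm h2 he0)

lemma ac_cpt (e : V) {S : Set V} (hS : IsCompact S) (hSi : S ⊆ interior (Ici (0:V))) :
    ∃ c : ℝ, 0 < c ∧ ∀ s ∈ S, c • e ≤ s := by
  obtain ⟨δ, hδ, hsub⟩ := hS.exists_thickening_subset_open isOpen_interior hSi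
  refine ⟨δ / (2 * (‖e‖ + 1)), by positivity, fun s hs => ?_⟩
  have : s - (δ / (2 * (‖e‖ + 1))) • e ∈ Metric.thickening δ S := by
    rw [Metric.mem_thickening_iff]
    refine ⟨s, hs, ?_⟩
    rw [dist_eq_norm]
    have h : s - (δ / (2 * (‖e‖ + 1))) • e - s = -((δ / (2 * (‖e‖ + 1))) • e) := by abel
    rw [h, norm_neg, norm_smul, Real.norm_of_nonneg (by positivity)]
    rw [div_mul_eq_mul_div, div_lt_iff₀ (by positivity)]
    nlinarith [norm_nonneg e]
  exact sub_nonneg.mp (interior_subset (hsub this))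

lemma ac_away (e : V) {S : Set V} (hS : IsCompact S) (h0 : (0:V) ∉ S) (he0 : 0 ≤ e) :
    ∃ c : ℝ, 0 < c ∧ ∀ s ∈ S, ∀ α : ℝ, -(α • e) ≤ s → s ≤ α • e → c ≤ α := by
  by_contra hcon
  push Not at hcon
  have hn : ∀ n : ℕ, (0:ℝ) < 1 / ((n:ℝ) + 1) := fun n => by positivity
  choose s hs α h1 h2 h3 using fun n : ℕ => hcon (1 / ((n:ℝ) + 1)) (hn n)
  obtain ⟨x, hx, φ, hφ, hlim⟩ := hS.tendsto_subseq hs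
  have hz : Tendsto (fun n : ℕ => (1 / (((φ n : ℕ) : ℝ) + 1)) • e) atTop (𝓝 (0:V)) := by
    have := (tendsto_one_div_add_atTop_nhds_zero_nat (𝕜 := ℝ)).comp hφ.tendsto_atTop
    simpa using this.smul_const e
  have hle : ∀ n, α n • e ≤ (1 / ((n:ℝ) + 1)) • e := fun n =>
    smul_le_smul_of_nonneg_right (h3 n).le he0
  have hA : x ≤ 0 := le_of_tendsto_of_tendsto' hlim hz (fun n => (h2 (φ n)).trans (hle (φ n)))
  have hB : -(0:V) ≤ x := le_of_tendsto_of_tendsto' hz.neg hlim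
    (fun n => (neg_le_neg (hle (φ n))).trans (h1 (φ n)))
  rw [neg_zero] at hB
  exact h0 (le_antisymm hA hB ▸ hx)

lemma ac_coll [CompleteSpace V] {A : Set (V →L[ℝ] V)} (hA : IsCompact A)
    (hco : ∀ T ∈ A, IsCompactOperator T) :
    IsCompact (closure {w : V | ∃ T ∈ A, ∃ v : V, ‖v‖ ≤ 1 ∧ w = T v}) := by
  apply TotallyBounded.isCompact_of_isClosed _ isClosed_closure
  apply TotallyBounded.closure
  rw [Metric.totallyBounded_iff]
  intro ε hε
  obtain ⟨t, htA, htf, hcov⟩ := hA.finite_cover_balls (half_pos hε)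
  have h1 : TotallyBounded (⋃ T ∈ t, (T '' Metric.closedBall (0:V) 1)) := by
    rw [totallyBounded_biUnion htf]
    intro T hT
    have := (hco T (htA hT)).isCompact_closure_image_closedBall (𝕜₁ := ℝ) (𝕜₂ := ℝ) 
      (f := (T : V →ₛₗ[RingHom.id ℝ] V)) 1
    exact this.totallyBounded.subset subset_closure
  obtain ⟨s, hsf, hs⟩ := Metric.totallyBounded_iff.mp h1 (ε/2) (half_pos hε)
  refine ⟨s, hsf, ?_⟩
  rintro w ⟨T, hT, v, hv, rfl⟩
  have hT' := hcov hT
  simp only [mem_iUnion, exists_prop] at hT'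
  obtain ⟨T', hT't, hd⟩ := hT'
  have h2 : T' v ∈ ⋃ y ∈ s, Metric.ball y (ε/2) := hs (by
    simp only [mem_iUnion, exists_prop]
    exact ⟨T', hT't, v, by simpa using hv, rfl⟩)
  simp only [mem_iUnion, exists_prop] at h2 ⊢
  obtain ⟨y, hy, hy2⟩ := h2
  refine ⟨y, hy, ?_⟩
  rw [Metric.mem_ball] at *
  have h3 : dist (T v) (T' v) < ε / 2 := by
    rw [dist_eq_norm, ← sub_apply]
    rw [dist_eq_norm] at hd
    calc ‖(T - T') v‖ ≤ ‖T - T'‖ * ‖v‖ := (T - T').le_opNorm v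
      _ ≤ ‖T - T'‖ * 1 := by gcongr
      _ < ε/2 := by linarith
  linarith [dist_triangle (T v) (T' v) y]

lemma ac_int_ne {e v : V} (he0 : 0 ≤ e) (hne : e ≠ 0) (hv : v ∈ interior (Ici (0:V))) : v ≠ 0 := by
  rintro rfl
  obtain ⟨c, hc, h⟩ := ac_cpt e (S := {(0:V)}) isCompact_singleton (by simpa using hv)
  have h1 : c • e ≤ (0:ℝ) • e := by simpa using h 0 rfl
  linarith [ac_le he0 hne h1]

lemma ac_int_up {v w : V} (hv : v ∈ interior (Ici (0:V))) (h : v ≤ w) :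
    w ∈ interior (Ici (0:V)) := by
  have h1 : (fun z => z + (v - w)) ⁻¹' interior (Ici (0:V)) ⊆ Ici 0 := by
    intro z hz
    have hz' : (0:V) ≤ z + (v - w) := interior_subset hz
    have : z + (v - w) ≤ z := by
      have : v - w ≤ 0 := sub_nonpos.mpr h
      simpa using add_le_add_right this z
    exact hz'.trans this
  have h2 : IsOpen ((fun z => z + (v - w)) ⁻¹' interior (Ici (0:V))) :=
    isOpen_interior.preimage (by fun_prop)
  exact interior_maximal h1 h2 (by simpa using hv)

lemma ac_mono {T : V →L[ℝ] V} (hT : ∀ v, 0 ≤ v → v ≠ 0 → T v ∈ interior (Ici (0:V)))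
    {x y : V} (h : x ≤ y) : T x ≤ T y := by
  rcases eq_or_ne x y with rfl | hne
  · exact le_rfl
  have := hT (y - x) (sub_nonneg.mpr h) (sub_ne_zero.mpr hne.symm)
  rw [map_sub] at this
  exact sub_nonneg.mp (interior_subset this)

lemma ac_U [CompleteSpace V] {e : V} (he : e ∈ interior (Ici (0:V))) (hne : e ≠ 0)
    {A : Set (V →L[ℝ] V)} (hA : IsCompact A) (hco : ∀ T ∈ A, IsCompactOperator T)
    (hsp : ∀ T ∈ A, ∀ v, 0 ≤ v → v ≠ 0 → T v ∈ interior (Ici (0:V))) :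
    ∃ B : ℝ, 0 < B ∧ ∀ T : ℕ → V →L[ℝ] V, (∀ n, T n ∈ A) → ∀ u : ℕ → V, u 0 = e →
      (∀ n, u (n+1) = T n (u n)) → ∀ n, ‖u n‖ • e ≤ B • u n := by
  have he0 : 0 ≤ e := interior_subset he
  obtain ⟨M, hM, hTM⟩ := hA.isBounded.exists_pos_norm_le
  obtain ⟨κ, hκ, hTe⟩ := ac_cpt e (S := (fun T : V →L[ℝ] V => T e) '' A)
    (hA.image (by fun_prop)) (by rintro _ ⟨T, hT, rfl⟩; exact hsp T hT e he0 hne)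
  have hCC := ac_coll hA hco
  set CC := closure {w : V | ∃ T ∈ A, ∃ v : V, ‖v‖ ≤ 1 ∧ w = T v} with hCCdef
  have hS2 : IsCompact (CC ∩ (Ici (0:V) ∩ {w | κ ≤ ‖w‖})) :=
    hCC.inter_right (isClosed_Ici.inter (isClosed_le continuous_const continuous_norm))
  obtain ⟨c1, hc1, hTw⟩ := ac_cpt e
    (S := (fun p : (V →L[ℝ] V) × V => p.1 p.2) '' (A ×ˢ (CC ∩ (Ici (0:V) ∩ {w | κ ≤ ‖w‖}))))
    ((hA.prod hS2).image (by fun_prop)) (by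
      rintro _ ⟨⟨T, w⟩, ⟨hT, hw⟩, rfl⟩
      refine hsp T hT w hw.2.1 ?_
      rintro rfl
      have : κ ≤ ‖(0:V)‖ := hw.2.2
      rw [norm_zero] at this; linarith)
  set B0 := max ‖e‖ (M^2 / c1) with hB0
  have hB0pos : 0 < B0 := lt_max_of_lt_left (norm_pos_iff.mpr hne)
  set D := M / κ with hD
  have hDpos : 0 < D := by positivity
  refine ⟨max 1 D * B0, by positivity, ?_⟩
  intro T hT u hu0 hu
  have hupos : ∀ n, 0 ≤ u n ∧ u n ≠ 0 := by
    intro n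
    induction n with
    | zero => rw [hu0]; exact ⟨he0, hne⟩
    | succ n ih =>
      rw [hu n]
      have := hsp (T n) (hT n) _ ih.1 ih.2
      exact ⟨interior_subset this, ac_int_ne he0 hne this⟩
  have hmono : ∀ n x y, x ≤ y → T n x ≤ T n y := fun n x y h => ac_mono (hsp _ (hT n)) h
  have hTe' : ∀ n, κ • e ≤ T n e := fun n => hTe _ ⟨T n, hT n, rfl⟩
  have hnorm : ∀ n, ‖u (n+1)‖ ≤ M * ‖u n‖ := fun n => by
    rw [hu n]; exact (T n).le_of_opNorm_le (hTM _ (hT n)) _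
  have hkey : ∀ (n : ℕ) (B : ℝ), ‖u n‖ • e ≤ B • u n → (κ * ‖u n‖) • e ≤ B • u (n+1) := by
    intro n B h
    have h1 := hmono n _ _ h
    rw [map_smul, map_smul, ← hu n] at h1
    refine le_trans ?_ h1
    rw [mul_comm, mul_smul]
    exact smul_le_smul_of_nonneg_left (hTe' n) (norm_nonneg _)
  have hstep : ∀ (n : ℕ) (B : ℝ), ‖u n‖ • e ≤ B • u n → ‖u (n+1)‖ • e ≤ (D * B) • u (n+1) := by
    intro n B h
    have h1 := hkey n B h
    calc ‖u (n+1)‖ • e ≤ (D * (κ * ‖u n‖)) • e := by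
          apply smul_le_smul_of_nonneg_right _ he0
          have : D * (κ * ‖u n‖) = M * ‖u n‖ := by rw [hD]; field_simp
          rw [this]; exact hnorm n
      _ = D • ((κ * ‖u n‖) • e) := by rw [mul_smul]
      _ ≤ D • (B • u (n+1)) := smul_le_smul_of_nonneg_left h1 hDpos.le
      _ = _ := by rw [mul_smul]
  have hstep1 : ∀ (n : ℕ) (B : ℝ), ‖u n‖ • e ≤ B • u n → ‖u (n+1)‖ ≤ κ * ‖u n‖ →
      ‖u (n+1)‖ • e ≤ B • u (n+1) := fun n B h h2 =>
    (smul_le_smul_of_nonneg_right h2 he0).trans (hkey n B h)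
  have hstep2 : ∀ n, κ * ‖u n‖ ≤ ‖u (n+1)‖ → ‖u (n+2)‖ • e ≤ B0 • u (n+2) := by
    intro n h
    have hn : 0 < ‖u n‖ := norm_pos_iff.mpr (hupos n).2
    have h1 : c1 • e ≤ T (n+1) (‖u n‖⁻¹ • u (n+1)) := by
      refine hTw _ ⟨⟨T (n+1), ‖u n‖⁻¹ • u (n+1)⟩, ⟨hT _, subset_closure ?_, ?_, ?_⟩, rfl⟩
      · refine ⟨T n, hT n, ‖u n‖⁻¹ • u n, ?_, by rw [map_smul, ← hu n]⟩
        rw [norm_smul, norm_inv, norm_norm, inv_mul_cancel₀ hn.ne']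
      · exact smul_nonneg (by positivity) (hupos _).1
      · show κ ≤ ‖‖u n‖⁻¹ • u (n+1)‖
        rw [norm_smul, norm_inv, norm_norm, le_inv_mul_iff₀ hn]
        linarith
    rw [map_smul, ← hu] at h1
    have h2 : (c1 * ‖u n‖) • e ≤ u (n+2) := by
      have := smul_le_smul_of_nonneg_left h1 hn.le
      rwa [smul_smul, smul_smul, mul_inv_cancel₀ hn.ne', one_smul, mul_comm] at this
    calc ‖u (n+2)‖ • e ≤ ((M^2/c1) * (c1 * ‖u n‖)) • e := by
          apply smul_le_smul_of_nonneg_right _ he0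
          have : (M^2/c1) * (c1 * ‖u n‖) = M * (M * ‖u n‖) := by field_simp
          rw [this]
          exact (hnorm (n+1)).trans (by gcongr; exact hnorm n)
      _ = (M^2/c1) • ((c1 * ‖u n‖) • e) := by rw [mul_smul]
      _ ≤ (M^2/c1) • u (n+2) := smul_le_smul_of_nonneg_left h2 (by positivity)
      _ ≤ B0 • u (n+2) := smul_le_smul_of_nonneg_right (le_max_right _ _) (hupos _).1
  have hclaim : ∀ n, (‖u n‖ • e ≤ B0 • u n) ∨
      (‖u n‖ • e ≤ (D * B0) • u n ∧ ‖u (n+1)‖ • e ≤ B0 • u (n+1)) := by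
    intro n
    induction n with
    | zero =>
      left; rw [hu0]; exact smul_le_smul_of_nonneg_right (le_max_left _ _) he0
    | succ n ih =>
      rcases ih with h | h
      · rcases le_total (‖u (n+1)‖) (κ * ‖u n‖) with h2 | h2
        · left; exact hstep1 n B0 h h2
        · right; exact ⟨hstep n B0 h, hstep2 n h2⟩
      · left; exact h.2
  intro n
  rcases hclaim n with h | h
  · refine h.trans (smul_le_smul_of_nonneg_right ?_ (hupos n).1)
    nlinarith [le_max_left 1 D]
  · refine h.1.trans (smul_le_smul_of_nonneg_right ?_ (hupos n).1)
    exact mul_le_mul_of_nonneg_right (le_max_right 1 D) hB0pos.le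

end AbstractCone

section AbstractCone2

set_option linter.unusedSectionVars false

variable {V : Type*} [NormedAddCommGroup V] [NormedSpace ℝ V] [PartialOrder V]
  [IsOrderedAddMonoid V] [IsOrderedModule ℝ V] [OrderClosedTopology V]

lemma ac_contr [CompleteSpace V] {e : V} (he : e ∈ interior (Ici (0:V))) (hne : e ≠ 0)
    {A : Set (V →L[ℝ] V)} (hA : IsCompact A) (hco : ∀ T ∈ A, IsCompactOperator T)
    (hsp : ∀ T ∈ A, ∀ v, 0 ≤ v → v ≠ 0 → T v ∈ interior (Ici (0:V)))
    {b B M c2 C1 : ℝ} (hb : 0 < b) (hM : 0 < M) (hB : 0 < B)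
    (hbu : ∀ v : V, v ≤ (b * ‖v‖) • e) (hTM : ∀ T ∈ A, ‖T‖ ≤ M) :
    ∃ γ : ℝ, 0 < γ ∧ ∀ T ∈ A, ∀ u0 v0 : V, ∀ S ∈ A,  ∀ α : ℝ, 0 < α → u0 ≠ 0 → v0 ≠ 0 →
      c2 * ‖u0‖ ≤ ‖S u0‖ → 0 < c2 → ‖v0‖ ≤ C1 * α * ‖S u0‖ → ‖S u0‖ • e ≤ B • S u0 →
      S v0 ≤ α • S u0 → ¬ 0 ≤ S v0 → T (S v0) ≤ ((1 - γ) * α) • T (S u0) := by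
  have he0 : 0 ≤ e := interior_subset he
  have hCC := ac_coll hA hco
  set CC := closure {w : V | ∃ T ∈ A, ∃ v : V, ‖v‖ ≤ 1 ∧ w = T v} with hCCdef
  have hU : IsCompact ((fun p : ℝ × V => p.1 • p.2) '' (Icc 0 (1/c2) ×ˢ CC)) :=
    (isCompact_Icc.prod hCC).image (by fun_prop)
  have hW : IsCompact ((fun p : ℝ × V => p.1 • p.2) '' (Icc 0 C1 ×ˢ CC)) :=
    (isCompact_Icc.prod hCC).image (by fun_prop)
  set U := ((fun p : ℝ × V => p.1 • p.2) '' (Icc 0 (1/c2) ×ˢ CC))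
  set W := ((fun p : ℝ × V => p.1 • p.2) '' (Icc 0 C1 ×ˢ CC))
  have hZ : IsCompact ((A ×ˢ U ×ˢ W) ∩ {p : (V →L[ℝ] V) × V × V | e ≤ B • p.2.1 ∧ p.2.2 ≤ p.2.1 ∧
      B • p.2.2 ∉ interior (Ici (0:V))}) := by
    apply (hA.prod (hU.prod hW)).inter_right
    apply IsClosed.inter
    · exact isClosed_le continuous_const (by fun_prop)
    apply IsClosed.inter
    · exact isClosed_le (by fun_prop) (by fun_prop)
    · exact (isOpen_interior.isClosed_compl).preimage
        (f := fun p : (V →L[ℝ] V) × V × V => B • p.2.2) (by fun_prop)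
  obtain ⟨c4, hc4, hc4'⟩ := ac_cpt e (hZ.image (f := fun p => p.1 (p.2.1 - p.2.2)) (by fun_prop)) (by
    rintro _ ⟨⟨T, x, w⟩, ⟨⟨hT, hx, hw⟩, h1, h2, h3⟩, rfl⟩
    refine hsp T hT _ (sub_nonneg.mpr h2) ?_
    intro h0
    have : x = w := sub_eq_zero.mp h0
    subst this
    exact h3 (ac_int_up he h1))
  refine ⟨c4 / (b * M), by positivity, ?_⟩
  intro T hT u0 v0 S hS α hα hu0 hv0 hc2u hc2 hv hQ hle hnc
  have hnu0 : 0 < ‖u0‖ := norm_pos_iff.mpr hu0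
  have hnv0 : 0 < ‖v0‖ := norm_pos_iff.mpr hv0
  have hnu : 0 < ‖S u0‖ := lt_of_lt_of_le (by positivity) hc2u
  have hmono : ∀ x y, x ≤ y → T x ≤ T y := fun x y h => ac_mono (hsp _ hT) h
  set x := ‖S u0‖⁻¹ • S u0 with hx
  set w := (α * ‖S u0‖)⁻¹ • S v0 with hw
  have hmem : ∀ z : V, z ≠ 0 → ‖z‖⁻¹ • S z ∈ CC := by
    intro z hz
    refine subset_closure ⟨S, hS, ‖z‖⁻¹ • z, ?_, by rw [map_smul]⟩
    rw [norm_smul, norm_inv, norm_norm, inv_mul_cancel₀ (norm_pos_iff.mpr hz).ne']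
  have hxU : x ∈ U := by
    refine ⟨⟨‖u0‖ / ‖S u0‖, ‖u0‖⁻¹ • S u0⟩, ⟨⟨by positivity, ?_⟩, hmem u0 hu0⟩, ?_⟩
    · show ‖u0‖ / ‖S u0‖ ≤ 1 / c2
      rw [div_le_div_iff₀ hnu hc2]; linarith
    · show (‖u0‖ / ‖S u0‖) • (‖u0‖⁻¹ • S u0) = x
      rw [smul_smul, hx]; congr 1; field_simp
  have hwW : w ∈ W := by
    refine ⟨⟨‖v0‖ / (α * ‖S u0‖), ‖v0‖⁻¹ • S v0⟩, ⟨⟨by positivity, ?_⟩, hmem v0 hv0⟩, ?_⟩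
    · show ‖v0‖ / (α * ‖S u0‖) ≤ C1
      rw [div_le_iff₀ (by positivity)]; linarith
    · show (‖v0‖ / (α * ‖S u0‖)) • (‖v0‖⁻¹ • S v0) = w
      rw [smul_smul, hw]; congr 1; field_simp
  have hex : e ≤ B • x := by
    have := smul_le_smul_of_nonneg_left hQ (inv_nonneg.mpr hnu.le)
    rwa [smul_smul, inv_mul_cancel₀ hnu.ne', one_smul, smul_comm] at this
  have hwx : w ≤ x := by
    have := smul_le_smul_of_nonneg_left hle (inv_nonneg.mpr (mul_pos hα hnu).le)
    refine this.trans_eq ?_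
    rw [smul_smul, hx]; congr 1; field_simp
  have hSv : S v0 = (α * ‖S u0‖) • w := by
    rw [hw, smul_smul, mul_inv_cancel₀ (by positivity), one_smul]
  have hSu : S u0 = ‖S u0‖ • x := by
    rw [hx, smul_smul, mul_inv_cancel₀ (by positivity), one_smul]
  have hnc' : B • w ∉ interior (Ici (0:V)) := by
    intro h
    apply hnc
    rw [hSv]
    have h1 : (0:V) ≤ B • w := interior_subset h
    have h2 : (0:V) ≤ w := by
      have := smul_nonneg (inv_nonneg.mpr hB.le) h1
      rwa [smul_smul, inv_mul_cancel₀ hB.ne', one_smul] at this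
    exact smul_nonneg (by positivity) h2
  have key : c4 • e ≤ T (x - w) := hc4' _ ⟨⟨T, x, w⟩, ⟨⟨hT, hxU, hwW⟩, hex, hwx, hnc'⟩, rfl⟩
  have hTx : T x ≤ (b * M) • e := by
    refine (hbu _).trans (smul_le_smul_of_nonneg_right ?_ he0)
    have : ‖T x‖ ≤ M * ‖x‖ := T.le_of_opNorm_le (hTM T hT) x
    have hx1 : ‖x‖ = 1 := by
      rw [hx, norm_smul, norm_inv, norm_norm, inv_mul_cancel₀ hnu.ne']
    rw [hx1, mul_one] at this
    gcongr
  have h5 : (c4 / (b * M)) • T x ≤ c4 • e := by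
    refine (smul_le_smul_of_nonneg_left hTx (by positivity)).trans_eq ?_
    rw [smul_smul]; congr 1; field_simp
  have h6 : T w ≤ (1 - c4 / (b * M)) • T x := by
    have h7 := h5.trans key
    rw [map_sub, le_sub_comm] at h7
    refine h7.trans_eq ?_
    rw [sub_smul, one_smul]
  rw [hSv, map_smul]
  refine (smul_le_smul_of_nonneg_left h6 (by positivity)).trans_eq ?_
  conv_rhs => rw [hSu, map_smul]
  rw [smul_smul, smul_smul]; congr 1; ring

set_option maxHeartbeats 1600000 in
lemma ac_V [CompleteSpace V] {e : V} (he : e ∈ interior (Ici (0:V))) (hne : e ≠ 0)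
    {A : Set (V →L[ℝ] V)} (hA : IsCompact A) (hco : ∀ T ∈ A, IsCompactOperator T)
    (hsp : ∀ T ∈ A, ∀ v, 0 ≤ v → v ≠ 0 → T v ∈ interior (Ici (0:V))) :
    ∃ C θ : ℝ, 0 < C ∧ 0 < θ ∧ θ < 1 ∧ ∀ T : ℕ → V →L[ℝ] V, (∀ n, T n ∈ A) →
      ∀ u : ℕ → V, u 0 = e → (∀ n, u (n+1) = T n (u n)) →
      ∀ v : ℕ → V, (∀ n, v (n+1) = T n (v n)) → (∀ n, ¬ 0 ≤ v n) → (∀ n, ¬ v n ≤ 0) →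
      ∀ n, ‖v n‖ ≤ C * θ ^ n * ‖u n‖ * ‖v 0‖ := by
  have he0 : 0 ≤ e := interior_subset he
  obtain ⟨b, hb, hbu⟩ := ac_unit he
  obtain ⟨B, hB, hQ⟩ := ac_U he hne hA hco hsp
  obtain ⟨M, hM, hTM⟩ := hA.isBounded.exists_pos_norm_le
  obtain ⟨κ, hκ, hTe⟩ := ac_cpt e (S := (fun T : V →L[ℝ] V => T e) '' A)
    (hA.image (by fun_prop)) (by rintro _ ⟨T, hT, rfl⟩; exact hsp T hT e he0 hne)
  have hCC := ac_coll hA hco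
  set CC := closure {w : V | ∃ T ∈ A, ∃ v : V, ‖v‖ ≤ 1 ∧ w = T v} with hCCdef
  obtain ⟨c2, hc2def⟩ : ∃ c2, c2 = κ / (B * b) := ⟨_, rfl⟩
  have hc2 : 0 < c2 := by rw [hc2def]; positivity
  obtain ⟨c3, hc3, hc3'⟩ := ac_away e (S := CC ∩ {w | c2 / 4 ≤ ‖w‖})
    (hCC.inter_right (isClosed_le continuous_const continuous_norm)) (by
      rintro ⟨_, h⟩
      have : c2 / 4 ≤ ‖(0:V)‖ := h
      rw [norm_zero] at this; linarith) he0
  obtain ⟨C1, hC1def⟩ : ∃ C1, C1 = b / c3 := ⟨_, rfl⟩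
  have hC1 : 0 < C1 := by rw [hC1def]; positivity
  obtain ⟨γ, hγ, hcontr⟩ := ac_contr he hne hA hco hsp (c2 := c2) (C1 := C1) hb hM hB hbu hTM
  obtain ⟨θ, hθdef⟩ : ∃ θ, θ = max (1/2) (1 - γ) := ⟨_, rfl⟩
  have hθ2 : 1/2 ≤ θ := by rw [hθdef]; exact le_max_left _ _
  have hθγ : 1 - γ ≤ θ := by rw [hθdef]; exact le_max_right _ _
  have hθ1 : θ < 1 := by rw [hθdef]; exact max_lt (by norm_num) (by linarith)
  have hθ0 : 0 < θ := by linarith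
  obtain ⟨Λ, hΛdef⟩ : ∃ Λ, Λ = M * C1 + 2 * M^2 * C1 / c2 + 1 := ⟨_, rfl⟩
  have hp1 : 0 < M * C1 := by positivity
  have hp2 : 0 < 2 * M^2 * C1 / c2 := by positivity
  have hΛ1 : M * C1 ≤ Λ := by linarith
  have hΛ2 : 2 * M^2 * C1 / c2 ≤ Λ := by linarith
  have hΛ3 : 1 ≤ Λ := by linarith
  have hΛ0 : 0 < Λ := by linarith
  obtain ⟨N, hN⟩ : ∃ N : ℕ, max 2 (2 * b * B * Λ) < 4 ^ N := pow_unbounded_of_one_lt _ (by norm_num)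
  have hN1 : (2:ℝ) ≤ 4 ^ N := (le_max_left _ _).trans hN.le
  have hN2 : 2 * b * B * Λ ≤ 4 ^ N := (le_max_right _ _).trans hN.le
  obtain ⟨ϑ, hϑdef⟩ : ∃ ϑ : ℝ, ϑ = θ ^ ((1:ℝ) / ((N+1 : ℕ):ℝ)) := ⟨_, rfl⟩
  have hϑ0 : 0 < ϑ := by rw [hϑdef]; positivity
  have hϑ1 : ϑ < 1 := by rw [hϑdef]; exact Real.rpow_lt_one hθ0.le hθ1 (by positivity)
  have hϑN : ϑ ^ (N+1) = θ := by
    rw [hϑdef, ← Real.rpow_natCast, ← Real.rpow_mul hθ0.le]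
    rw [one_div_mul_cancel (by positivity), Real.rpow_one]
  have hnepos : 0 < ‖e‖ := norm_pos_iff.mpr hne
  refine ⟨Λ * θ⁻¹ * (b + 1/‖e‖), ϑ, by positivity, hϑ0, hϑ1, ?_⟩
  intro T hT u hu0 hu v hv hvn1 hvn2
  have hupos : ∀ n, 0 ≤ u n ∧ u n ≠ 0 := by
    intro n
    induction n with
    | zero => rw [hu0]; exact ⟨he0, hne⟩
    | succ n ih =>
      rw [hu n]
      have := hsp (T n) (hT n) _ ih.1 ih.2
      exact ⟨interior_subset this, ac_int_ne he0 hne this⟩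
  have hun : ∀ n, 0 < ‖u n‖ := fun n => norm_pos_iff.mpr (hupos n).2
  have hv0 : ∀ n, v n ≠ 0 := fun n h => hvn1 n h.ge
  have hvnn : ∀ n, 0 < ‖v n‖ := fun n => norm_pos_iff.mpr (hv0 n)
  have hmono : ∀ n x y, x ≤ y → T n x ≤ T n y := fun n x y h => ac_mono (hsp _ (hT n)) h
  have hQ' := hQ T hT u hu0 hu
  have hvM : ∀ n, ‖v (n+1)‖ ≤ M * ‖v n‖ := fun n => by
    rw [hv n]; exact (T n).le_of_opNorm_le (hTM _ (hT n)) _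
  have hF1 : ∀ n, c2 * ‖u n‖ ≤ ‖u (n+1)‖ := by
    intro n
    have h1 := hmono n _ _ (hQ' n)
    rw [map_smul, map_smul, ← hu n] at h1
    have h2 : (‖u n‖ * κ) • e ≤ (B * (b * ‖u (n+1)‖)) • e := by
      calc (‖u n‖ * κ) • e = ‖u n‖ • κ • e := by rw [mul_smul]
        _ ≤ ‖u n‖ • T n e := smul_le_smul_of_nonneg_left (hTe _ ⟨T n, hT n, rfl⟩) (norm_nonneg _)
        _ ≤ B • u (n+1) := h1
        _ ≤ B • (b * ‖u (n+1)‖) • e := smul_le_smul_of_nonneg_left (hbu _) hB.le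
        _ = _ := by rw [← mul_smul]
    have h3 := ac_le he0 hne h2
    rw [hc2def, div_mul_eq_mul_div, div_le_iff₀ (by positivity)]
    linarith
  -- persistence of order bounds
  have hAstep : ∀ (n : ℕ) (τ : ℝ), v n ≤ τ • u n → v (n+1) ≤ τ • u (n+1) := by
    intro n τ h
    have := hmono n _ _ h
    rwa [map_smul, ← hu n, ← hv n] at this
  have hAstep' : ∀ (n : ℕ) (τ : ℝ), -(τ • u n) ≤ v n → -(τ • u (n+1)) ≤ v (n+1) := by
    intro n τ h
    have := hmono n _ _ h
    rwa [map_neg, map_smul, ← hu n, ← hv n] at this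
  have hF2 : ∀ (n : ℕ) (τ : ℝ), c2/4 * ‖v n‖ ≤ ‖v (n+1)‖ → -(τ • u (n+1)) ≤ v (n+1) →
      v (n+1) ≤ τ • u (n+1) → 0 < τ → ‖v n‖ ≤ C1 * τ * ‖u (n+1)‖ := by
    intro n τ h1 h2 h3 hτ
    have hup : v (n+1) ≤ (τ * (b * ‖u (n+1)‖)) • e := by
      rw [mul_smul]
      exact h3.trans (smul_le_smul_of_nonneg_left (hbu _) hτ.le)
    have hlo : -((τ * (b * ‖u (n+1)‖)) • e) ≤ v (n+1) := by
      refine le_trans (neg_le_neg ?_) h2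
      rw [mul_smul]
      exact smul_le_smul_of_nonneg_left (hbu _) hτ.le
    have hi : 0 ≤ ‖v n‖⁻¹ := by positivity
    have hup' := smul_le_smul_of_nonneg_left hup hi
    have hlo' := smul_le_smul_of_nonneg_left hlo hi
    rw [smul_neg, smul_smul] at hlo'
    rw [smul_smul] at hup'
    have h4 := hc3' (‖v n‖⁻¹ • v (n+1)) ⟨subset_closure ⟨T n, hT n, ‖v n‖⁻¹ • v n, by
        rw [norm_smul, norm_inv, norm_norm, inv_mul_cancel₀ (hvnn n).ne'], by
        rw [map_smul, hv n]⟩, by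
        show c2/4 ≤ ‖‖v n‖⁻¹ • v (n+1)‖
        rw [norm_smul, norm_inv, norm_norm, le_inv_mul_iff₀ (hvnn n)]; linarith⟩ _ hlo' hup'
    rw [le_inv_mul_iff₀ (hvnn n)] at h4
    have : C1 * τ * ‖u (n+1)‖ = τ * (b * ‖u (n+1)‖) / c3 := by rw [hC1def]; ring
    rw [this, le_div_iff₀ hc3]; exact h4
  -- the combined predicate
  obtain ⟨P, hP⟩ : ∃ P : ℕ → ℝ → Prop, ∀ n τ, P n τ ↔
    (-(τ • u n) ≤ v n ∧ v n ≤ τ • u n ∧ ‖v n‖ ≤ Λ * τ * ‖u n‖) := ⟨_, fun _ _ => Iff.rfl⟩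
  have hPmono : ∀ n τ τ', τ ≤ τ' → P n τ → P n τ' := by
    intro n τ τ' h hp
    rw [hP] at hp ⊢
    have h1 : τ • u n ≤ τ' • u n := smul_le_smul_of_nonneg_right h (hupos n).1
    refine ⟨(neg_le_neg h1).trans hp.1, hp.2.1.trans h1, hp.2.2.trans ?_⟩
    gcongr
  have hcase1 : ∀ (n : ℕ) (ρ : ℝ), ‖v (n+1)‖ ≤ c2/4 * ‖v n‖ → ‖v n‖ ≤ ρ * ‖u n‖ →
      ‖v (n+1)‖ ≤ ρ / 4 * ‖u (n+1)‖ := by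
    intro n ρ h1 h2
    have hρ : 0 ≤ ρ := by
      by_contra hcon
      push Not at hcon
      nlinarith [hvnn n, hun n]
    calc ‖v (n+1)‖ ≤ c2/4 * (ρ * ‖u n‖) := h1.trans (by gcongr)
      _ = ρ/4 * (c2 * ‖u n‖) := by ring
      _ ≤ _ := by gcongr; exact hF1 n
  have hPstep : ∀ n τ, 0 < τ → P n τ → P (n+1) τ := by
    intro n τ hτ hp
    rw [hP] at hp ⊢
    have a1 := hAstep' n τ hp.1
    have a2 := hAstep n τ hp.2.1
    refine ⟨a1, a2, ?_⟩
    rcases le_total ‖v (n+1)‖ (c2/4 * ‖v n‖) with h | h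
    · refine (hcase1 n _ h hp.2.2).trans ?_
      have := hun (n+1)
      gcongr
      nlinarith [mul_pos hΛ0 hτ]
    · have h1 := hF2 n τ h a1 a2 hτ
      calc ‖v (n+1)‖ ≤ M * (C1 * τ * ‖u (n+1)‖) := (hvM n).trans (by gcongr)
        _ = (M * C1) * τ * ‖u (n+1)‖ := by ring
        _ ≤ _ := by gcongr
  have hcase2 : ∀ n τ, 0 < τ → P n τ → c2/4 * ‖v n‖ ≤ ‖v (n+1)‖ → P (n+2) (θ * τ) := by
    intro n τ hτ hp h
    rw [hP] at hp ⊢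
    have a1 := hAstep' n τ hp.1
    have a2 := hAstep n τ hp.2.1
    have h1 := hF2 n τ h a1 a2 hτ
    have hθu : ((1-γ)*τ) • u (n+2) ≤ (θ * τ) • u (n+2) :=
      smul_le_smul_of_nonneg_right (by gcongr) (hupos _).1
    have b1 : v (n+2) ≤ ((1-γ)*τ) • u (n+2) := by
      rw [hv (n+1), hu (n+1)]
      rw [hv n, hu n]
      refine hcontr (T (n+1)) (hT _) (u n) (v n) (T n) (hT _) τ hτ (hupos n).2 (hv0 n) ?_ hc2 ?_ ?_ ?_ ?_
      · rw [← hu n]; exact hF1 n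
      · rw [← hu n]; exact h1
      · rw [← hu n]; exact hQ' _
      · rw [← hu n, ← hv n]; exact a2
      · rw [← hv n]; exact hvn1 _
    have b2 : -v (n+2) ≤ ((1-γ)*τ) • u (n+2) := by
      have hh := hcontr (T (n+1)) (hT _) (u n) (-v n) (T n) (hT _) τ hτ (hupos n).2
        (neg_ne_zero.mpr (hv0 n)) (by rw [← hu n]; exact hF1 n) hc2
        (by rw [← hu n, norm_neg]; exact h1) (by rw [← hu n]; exact hQ' _)
        (by rw [← hu n, map_neg, ← hv n]; exact neg_le.mp a1)
        (by rw [map_neg, ← hv n]; intro h0; exact hvn2 _ (neg_nonneg.mp h0))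
      rwa [map_neg, map_neg, ← hv n, ← hu n, ← hv (n+1), ← hu (n+1)] at hh
    refine ⟨neg_le.mp (b2.trans hθu), b1.trans hθu, ?_⟩
    calc ‖v (n+2)‖ ≤ M * (M * (C1 * τ * ‖u (n+1)‖)) := by
          refine (hvM (n+1)).trans ?_
          gcongr
          exact (hvM n).trans (by gcongr)
      _ = (2 * M^2 * C1 / c2) * (1/2 * τ) * (c2 * ‖u (n+1)‖) := by field_simp
      _ ≤ Λ * (θ * τ) * ‖u (n+2)‖ := by
          have := hF1 (n+1)
          gcongr
  have hblock : ∀ (k n : ℕ) (τ : ℝ), 0 < τ → P n τ →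
      P (n+k+1) (θ * τ) ∨ ‖v (n+k)‖ ≤ (Λ * τ / 4^k) * ‖u (n+k)‖ := by
    intro k n τ hτ hp
    have hpk : ∀ k, P (n+k) τ := by
      intro k
      induction k with
      | zero => exact hp
      | succ k ih => exact hPstep _ _ hτ ih
    induction k with
    | zero => right; rw [hP] at hp; simpa using hp.2.2
    | succ k ih =>
      rcases ih with h | h
      · left; exact hPstep _ _ (by positivity) h
      · rcases le_total ‖v (n+k+1)‖ (c2/4 * ‖v (n+k)‖) with h2 | h2
        · right
          refine (hcase1 _ _ h2 h).trans_eq ?_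
          show _ = Λ * τ / 4 ^ (k+1) * ‖u (n+k+1)‖
          rw [pow_succ]; field_simp
        · left; exact hcase2 _ _ hτ (hpk k) h2
  have hblockN : ∀ (n : ℕ) (τ : ℝ), 0 < τ → P n τ → P (n + (N+1)) (θ * τ) := by
    intro n τ hτ hp
    rcases hblock N n τ hτ hp with h | h
    · exact h
    · have h4 : (0:ℝ) < 4 ^ N := by positivity
      have hgen : ∀ w : V, ‖w‖ ≤ (Λ * τ / 4^N) * ‖u (n+N)‖ → w ≤ (τ/2) • u (n+N) := by
        intro w hw
        calc w ≤ (b * ‖w‖) • e := hbu w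
          _ ≤ (b * (Λ * τ / 4^N)) • (‖u (n+N)‖ • e) := by
            rw [smul_smul]
            apply smul_le_smul_of_nonneg_right _ he0
            rw [mul_assoc]; gcongr
          _ ≤ (b * (Λ * τ / 4^N)) • (B • u (n+N)) :=
            smul_le_smul_of_nonneg_left (hQ' _) (by positivity)
          _ ≤ (τ/2) • u (n+N) := by
            rw [smul_smul]
            apply smul_le_smul_of_nonneg_right _ (hupos _).1
            have : b * (Λ * τ / 4^N) * B = (2 * b * B * Λ) * τ / (2 * 4^N) := by field_simp
            rw [this, div_le_div_iff₀ (by positivity) (by norm_num)]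
            nlinarith
      have hPh : P (n+N) (τ/2) := by
        rw [hP]
        refine ⟨?_, hgen _ h, h.trans ?_⟩
        · exact neg_le.mp (hgen _ (by rwa [norm_neg]))
        · have : Λ * τ / 4^N ≤ Λ * (τ/2) := by
            rw [div_le_iff₀ h4]
            nlinarith [mul_pos hΛ0 hτ]
          have := hun (n+N)
          gcongr
      exact hPstep _ _ (by positivity) (hPmono _ _ _ (by nlinarith) hPh)
  obtain ⟨τ0, hτ0def⟩ : ∃ τ0, τ0 = (b + 1/‖e‖) * ‖v 0‖ := ⟨_, rfl⟩
  have hτ0 : 0 < τ0 := by rw [hτ0def]; have := hvnn 0; positivity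
  have hP0 : P 0 τ0 := by
    have hgen : ∀ w : V, ‖w‖ = ‖v 0‖ → w ≤ τ0 • e := by
      intro w hw
      refine (hbu w).trans (smul_le_smul_of_nonneg_right ?_ he0)
      rw [hw, hτ0def]
      have : 0 < 1 / ‖e‖ := by positivity
      nlinarith [hvnn 0]
    rw [hP, hu0]
    refine ⟨neg_le.mp (hgen _ (norm_neg _)), hgen _ rfl, ?_⟩
    have h1 : ‖v 0‖ ≤ τ0 * ‖e‖ := by
      rw [hτ0def]
      have : (b + 1/‖e‖) * ‖v 0‖ * ‖e‖ = b * ‖v 0‖ * ‖e‖ + ‖v 0‖ := by field_simp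
      rw [this]
      have := hvnn 0
      have : 0 < b * ‖v 0‖ * ‖e‖ := by positivity
      linarith
    have h2 : 0 < τ0 * ‖e‖ := by positivity
    nlinarith
  have hPk : ∀ k, P (k * (N+1)) (θ^k * τ0) := by
    intro k
    induction k with
    | zero => simpa using hP0
    | succ k ih =>
      have := hblockN _ _ (by positivity) ih
      have h1 : (k+1) * (N+1) = k * (N+1) + (N+1) := by ring
      rw [h1, pow_succ, mul_comm (θ^k) θ, mul_assoc]; exact this
  have hPkr : ∀ k r, P (k * (N+1) + r) (θ^k * τ0) := by
    intro k r
    induction r with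
    | zero => exact hPk k
    | succ r ih => exact hPstep _ _ (by positivity) ih
  intro n
  have hn := hPkr (n / (N+1)) (n % (N+1))
  have hdiv : n / (N+1) * (N+1) + n % (N+1) = n := Nat.div_add_mod' n (N+1)
  rw [hdiv, hP] at hn
  have hθk : θ ^ (n / (N+1)) ≤ θ⁻¹ * ϑ ^ n := by
    rw [le_inv_mul_iff₀ hθ0]
    have h1 : ϑ ^ n = θ ^ (n/(N+1)) * ϑ ^ (n % (N+1)) := by
      conv_lhs => rw [← hdiv]
      rw [pow_add, mul_comm (n/(N+1)) (N+1), pow_mul, hϑN]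
    rw [h1, mul_comm]
    have h2 : θ ≤ ϑ ^ (n % (N+1)) := by
      rw [← hϑN]
      exact pow_le_pow_of_le_one hϑ0.le hϑ1.le (Nat.mod_lt _ (by omega)).le
    gcongr
  calc ‖v n‖ ≤ Λ * (θ^(n/(N+1)) * τ0) * ‖u n‖ := hn.2.2
    _ ≤ Λ * ((θ⁻¹ * ϑ^n) * τ0) * ‖u n‖ := by gcongr
    _ = _ := by rw [hτ0def]; ring

end AbstractCone2

section AbstractCone3

set_option linter.unusedSectionVars false

variable {V : Type*} [NormedAddCommGroup V] [NormedSpace ℝ V] [PartialOrder V]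
  [IsOrderedAddMonoid V] [IsOrderedModule ℝ V] [OrderClosedTopology V]

lemma ac_monoconv {Q : Set V} (hQ : IsCompact Q) {s : ℕ → V} (hs : ∀ n, s n ∈ Q)
    (hm : Monotone s) : ∃ q, Tendsto s atTop (𝓝 q) := by
  obtain ⟨q, hq, hqc⟩ := hQ.exists_mapClusterPt (f := atTop) (u := s)
    (by rw [Filter.le_principal_iff]; exact Filter.mem_map.mpr (Eventually.of_forall hs))
  have hub : ∀ y, MapClusterPt y atTop s → ∀ n, s n ≤ y := by
    intro y hy n
    exact (isClosed_Ici (a := s n)).mem_of_mapClusterPt hy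
      (eventually_atTop.mpr ⟨n, fun k hk => hm hk⟩)
  have hle : ∀ y z, MapClusterPt y atTop s → MapClusterPt z atTop s → y ≤ z := by
    intro y z hy hz
    exact (isClosed_Iic (a := z)).mem_of_mapClusterPt hy
      (Eventually.of_forall fun k => hub z hz k)
  exact ⟨q, hQ.tendsto_nhds_of_unique_mapClusterPt (Eventually.of_forall hs)
    (fun y _ hyc => le_antisymm (hle y q hyc hqc) (hle q y hqc hyc))⟩

lemma ac_anticonv {Q : Set V} (hQ : IsCompact Q) {s : ℕ → V} (hs : ∀ n, s n ∈ Q)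
    (hm : Antitone s) : ∃ q, Tendsto s atTop (𝓝 q) := by
  obtain ⟨q, hq⟩ := ac_monoconv hQ.neg (s := fun n => - s n) (fun n => by simpa using hs n)
    (fun i j h => neg_le_neg (hm h))
  exact ⟨-q, by simpa using hq.neg⟩

/-- averaged derivative along a segment -/
noncomputable def avgD (G : V → V →L[ℝ] V) (y z : V) : V →L[ℝ] V :=
  ∫ s in (0:ℝ)..1, G (y + s • (z - y))

lemma avgD_cont [CompleteSpace V] {G : V → V →L[ℝ] V} (hG : Continuous G) :
    Continuous (fun p : V × V => avgD G p.1 p.2) := by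
  unfold avgD
  apply intervalIntegral.continuous_parametric_intervalIntegral_of_continuous'
  fun_prop

lemma avgD_self [CompleteSpace V] (G : V → V →L[ℝ] V) (y : V) : avgD G y y = G y := by
  unfold avgD
  simp

lemma avgD_sub [CompleteSpace V] {F : V → V} {G : V → V →L[ℝ] V} (hG : Continuous G)
    (hd : ∀ x, HasFDerivAt F (G x) x) (y z : V) : avgD G y z (z - y) = F z - F y := by
  unfold avgD
  have hc : Continuous (fun s : ℝ => G (y + s • (z - y))) := by fun_prop
  rw [ContinuousLinearMap.intervalIntegral_apply (hc.intervalIntegrable _ _)]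
  have hder : ∀ s ∈ uIcc (0:ℝ) 1, HasDerivAt (fun s : ℝ => F (y + s • (z - y)))
      (G (y + s • (z - y)) (z - y)) s := by
    intro s _
    have h1 : HasDerivAt (fun s : ℝ => y + s • (z - y)) (z - y) s := by
      simpa using ((hasDerivAt_id s).smul_const (z - y)).const_add y
    exact (hd _).comp_hasDerivAt s h1
  have hc2 : Continuous (fun s : ℝ => G (y + s • (z - y)) (z - y)) := by fun_prop
  rw [intervalIntegral.integral_eq_sub_of_hasDerivAt hder (hc2.intervalIntegrable _ _)]
  simp

lemma avgD_mem [CompleteSpace V] {G : V → V →L[ℝ] V} (hG : Continuous G) {S : Set (V →L[ℝ] V)}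
    (hSc : Convex ℝ S) (hScl : IsClosed S) (y z : V)
    (h : ∀ s ∈ Icc (0:ℝ) 1, G (y + s • (z - y)) ∈ S) : avgD G y z ∈ S := by
  unfold avgD
  rw [intervalIntegral.integral_of_le zero_le_one]
  have hc : Continuous (fun s : ℝ => G (y + s • (z - y))) := by fun_prop
  haveI : IsProbabilityMeasure (volume.restrict (Ioc (0:ℝ) 1)) := ⟨by simp⟩
  apply hSc.integral_mem hScl
  · rw [ae_restrict_iff' measurableSet_Ioc]
    exact Eventually.of_forall fun s hs => h s (Ioc_subset_Icc_self hs)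
  · exact (hc.integrableOn_Icc (a := 0) (b := 1)).mono_set Ioc_subset_Icc_self

lemma avgD_compact [CompleteSpace V] {G : V → V →L[ℝ] V} (hG : Continuous G)
    (hco : ∀ x, IsCompactOperator (G x)) (y z : V) : IsCompactOperator (avgD G y z) := by
  have : avgD G y z ∈ (compactOperator (RingHom.id ℝ) V V : Set (V →L[ℝ] V)) :=
    avgD_mem hG (Submodule.convex _) isClosed_setOfPred_isCompactOperator y z (fun s _ => hco _)
  exact this

lemma avgD_pos [CompleteSpace V] {G : V → V →L[ℝ] V} (hG : Continuous G) {e : V}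
    (he : e ∈ interior (Ici (0:V)))
    (hsp : ∀ x v, 0 ≤ v → v ≠ 0 → G x v ∈ interior (Ici (0:V))) (y z v : V)
    (hv : 0 ≤ v) (hv0 : v ≠ 0) : avgD G y z v ∈ interior (Ici (0:V)) := by
  obtain ⟨c, hc, h⟩ := ac_cpt e (S := (fun s : ℝ => G (y + s • (z - y)) v) '' Icc 0 1)
    (isCompact_Icc.image (by fun_prop)) (by rintro _ ⟨s, _, rfl⟩; exact hsp _ v hv hv0)
  have h1 : avgD G y z ∈ {T : V →L[ℝ] V | c • e ≤ T v} := by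
    apply avgD_mem hG
    · intro T hT S hS a b ha hb hab
      simp only [mem_ofPred_eq] at hT hS ⊢
      calc c • e = a • (c • e) + b • (c • e) := by rw [← add_smul, hab, one_smul]
        _ ≤ a • T v + b • S v := add_le_add (smul_le_smul_of_nonneg_left hT ha)
          (smul_le_smul_of_nonneg_left hS hb)
        _ = _ := by simp
    · exact isClosed_le continuous_const (by fun_prop)
    · intro s hs; exact h _ ⟨s, hs, rfl⟩
  refine ac_int_up ?_ h1
  have h2 : (fun w : V => c⁻¹ • w) ⁻¹' interior (Ici (0:V)) ⊆ Ici 0 := by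
    intro w hw
    have := smul_nonneg hc.le (interior_subset hw : (0:V) ≤ c⁻¹ • w)
    rwa [smul_smul, mul_inv_cancel₀ hc.ne', one_smul] at this
  refine interior_maximal h2 (isOpen_interior.preimage (by fun_prop)) ?_
  simp only [mem_preimage, smul_smul, inv_mul_cancel₀ hc.ne', one_smul]
  exact he

lemma pliss {a : ℕ → ℝ} (ha : ∀ n, 0 < a n) (hlim : Tendsto a atTop (𝓝 0)) (N : ℕ) :
    ∃ m, N ≤ m ∧ ∀ n, m ≤ n → a n ≤ a m := by
  obtain ⟨M, hM⟩ := eventually_atTop.mp (hlim.eventually_lt_const (ha N))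
  obtain ⟨m, hm, hmax⟩ := Finset.exists_max_image (Finset.Icc N (max N M)) a
    ⟨N, by simp⟩
  refine ⟨m, (Finset.mem_Icc.mp hm).1, fun n hn => ?_⟩
  by_cases h : n ≤ max N M
  · exact hmax n (Finset.mem_Icc.mpr ⟨(Finset.mem_Icc.mp hm).1.trans hn, h⟩)
  · push Not at h
    exact ((hM n ((le_max_right _ _).trans h.le)).le).trans (hmax N (by simp))

set_option maxHeartbeats 1600000 in
lemma orb_conv [CompleteSpace V] {e : V} (he : e ∈ interior (Ici (0:V))) (hne : e ≠ 0)
    {F : V → V} {G : V → V →L[ℝ] V} (hG : Continuous G)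
    (hd : ∀ x, HasFDerivAt F (G x) x) (hco : ∀ x, IsCompactOperator (G x))
    (hsp : ∀ x v, 0 ≤ v → v ≠ 0 → G x v ∈ interior (Ici (0:V)))
    {x : V} {Q : Set V} (hQ : IsCompact Q) (hxQ : ∀ n, F^[n] x ∈ Q)
    {u : ℕ → V} (hu0 : u 0 = e) (hu : ∀ n, u (n+1) = G (F^[n] x) (u n))
    {C : ℝ} (hC : ∀ n : ℕ, ‖u n‖ ≤ C * ((n:ℝ)+1)^2) :
    ∃ (m p : ℕ) (q : V), 1 ≤ p ∧ Tendsto (fun j => F^[m + j * p] x) atTop (𝓝 q) := by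
  have he0 : 0 ≤ e := interior_subset he
  obtain ⟨A, hAdef⟩ : ∃ A, A = (fun p : V × V => avgD G p.1 p.2) '' (Q ×ˢ Q) := ⟨_, rfl⟩
  have hAc : IsCompact A := by
    rw [hAdef]; exact (hQ.prod hQ).image (avgD_cont hG)
  have hAco : ∀ T ∈ A, IsCompactOperator T := by
    rw [hAdef]; rintro _ ⟨p, _, rfl⟩; exact avgD_compact hG hco _ _
  have hAsp : ∀ T ∈ A, ∀ v, 0 ≤ v → v ≠ 0 → T v ∈ interior (Ici (0:V)) := by
    rw [hAdef]; rintro _ ⟨p, _, rfl⟩ v hv hv0; exact avgD_pos hG he hsp _ _ v hv hv0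
  have hmemA : ∀ y ∈ Q, ∀ z ∈ Q, avgD G y z ∈ A := fun y hy z hz => by
    rw [hAdef]; exact ⟨(y, z), ⟨hy, hz⟩, rfl⟩
  have hmemG : ∀ y ∈ Q, G y ∈ A := fun y hy => by
    have := hmemA y hy y hy; rwa [avgD_self] at this
  obtain ⟨b, hb, hbu⟩ := ac_unit he
  obtain ⟨B, hB, hBQ⟩ := ac_U he hne hAc hAco hAsp
  obtain ⟨C2, θ, hC2, hθ0, hθ1, hV⟩ := ac_V he hne hAc hAco hAsp
  obtain ⟨κ, hκ, hTe⟩ := ac_cpt e (S := (fun T : V →L[ℝ] V => T e) '' A)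
    (hAc.image (by fun_prop)) (by rintro _ ⟨T, hT, rfl⟩; exact hAsp T hT e he0 hne)
  obtain ⟨σ, hσθ, hσ1⟩ : ∃ σ : ℝ, σ^2 * θ < 1 ∧ 1 < σ := by
    have h1 : ∀ᶠ σ in 𝓝 (1:ℝ), σ^2 * θ < 1 := by
      have : Tendsto (fun σ : ℝ => σ^2 * θ) (𝓝 1) (𝓝 (1^2 * θ)) :=
        (Continuous.tendsto (by fun_prop) 1)
      exact this.eventually_lt_const (by linarith)
    exact ((h1.filter_mono nhdsWithin_le_nhds).and
      (self_mem_nhdsWithin : Ioi (1:ℝ) ∈ 𝓝[>] (1:ℝ))).exists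
  have hσ0 : 0 < σ := by linarith
  obtain ⟨η, hηdef⟩ : ∃ η, η = (σ - 1) * κ / (B * b) := ⟨_, rfl⟩
  have hη : 0 < η := by
    rw [hηdef]; have : 0 < σ - 1 := by linarith
    positivity
  obtain ⟨δ1, hδ1, hδ⟩ : ∃ δ1 > 0, ∀ y ∈ Q, ∀ z ∈ Q, ‖z - y‖ ≤ δ1 → ‖avgD G y z - G y‖ ≤ η := by
    have := (hQ.prod hQ).uniformContinuousOn_of_continuous (avgD_cont hG).continuousOn
    rw [Metric.uniformContinuousOn_iff] at this
    obtain ⟨δ, hδ, h⟩ := this η hη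
    refine ⟨δ/2, by positivity, fun y hy z hz hyz => ?_⟩
    have h1 := h (y, z) ⟨hy, hz⟩ (y, y) ⟨hy, hy⟩ (by
      rw [Prod.dist_eq]
      simp only [dist_self, dist_eq_norm]
      exact max_lt hδ (by linarith))
    rw [avgD_self, dist_eq_norm] at h1
    exact h1.le
  have hcomp : ∀ y ∈ Q, ∀ z ∈ Q, ‖z - y‖ ≤ δ1 → ∀ w, ‖w‖ • e ≤ B • w →
      avgD G y z w ≤ σ • G y w := by
    intro y hy z hz hyz w hw
    have h1 : (avgD G y z - G y) w ≤ (b * (η * ‖w‖)) • e := by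
      refine (hbu _).trans (smul_le_smul_of_nonneg_right ?_ he0)
      have := (avgD G y z - G y).le_of_opNorm_le (hδ y hy z hz hyz) w
      gcongr
    have h2 := ac_mono (hAsp _ (hmemG y hy)) hw
    rw [map_smul, map_smul] at h2
    have h3 : (‖w‖ * κ) • e ≤ B • G y w := by
      rw [mul_smul]
      exact (smul_le_smul_of_nonneg_left (hTe _ ⟨G y, hmemG y hy, rfl⟩) (norm_nonneg _)).trans h2
    have h4 : (b * (η * ‖w‖)) • e ≤ (σ - 1) • G y w := by
      have := smul_le_smul_of_nonneg_left h3
        (show 0 ≤ (σ-1)/B by have : 0 < σ - 1 := by linarith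
                             positivity)
      rw [smul_smul, smul_smul, div_mul_cancel₀ _ hB.ne'] at this
      refine le_trans (le_of_eq ?_) this
      congr 1; rw [hηdef]; field_simp
    have h5 := h1.trans h4
    rw [sub_apply, sub_smul, one_smul] at h5
    exact (sub_le_sub_iff_right _).mp h5
  have hBQu := hBQ (fun n => G (F^[n] x)) (fun n => hmemG _ (hxQ n)) u hu0 hu
  have hupos : ∀ n, 0 ≤ u n ∧ u n ≠ 0 := by
    intro n
    induction n with
    | zero => rw [hu0]; exact ⟨he0, hne⟩
    | succ n ih =>
      rw [hu n]
      have := hsp (F^[n] x) _ ih.1 ih.2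
      exact ⟨interior_subset this, ac_int_ne he0 hne this⟩
  have hun : ∀ n, 0 < ‖u n‖ := fun n => norm_pos_iff.mpr (hupos n).2
  -- Pliss times
  have hlim : Tendsto (fun n => ‖u n‖ / σ^n) atTop (𝓝 0) := by
    have h1 := (tendsto_pow_const_div_const_pow_of_one_lt 2 hσ1).comp (tendsto_add_atTop_nat 1)
    have h2 : Tendsto (fun n : ℕ => (C * σ) * ((((n+1 : ℕ):ℝ))^2 / σ^(n+1))) atTop (𝓝 ((C*σ) * 0)) :=
      h1.const_mul _
    rw [mul_zero] at h2
    refine squeeze_zero (fun n => by positivity) (fun n => ?_) h2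
    have : (C * σ) * ((((n+1 : ℕ):ℝ))^2 / σ^(n+1)) = C * ((n:ℝ)+1)^2 / σ^n := by
      push_cast; rw [pow_succ σ n]; field_simp
    rw [this]
    gcongr
    exact hC n
  obtain ⟨φ, hφ, hφP⟩ := Filter.extraction_of_frequently_atTop
    (P := fun m => ∀ n, m ≤ n → ‖u n‖ / σ^n ≤ ‖u m‖ / σ^m) (by
      rw [frequently_atTop]
      intro N
      exact pliss (fun n => div_pos (hun n) (by positivity)) hlim N)
  obtain ⟨q0, hq0, ψ, hψ, hψlim⟩ := hQ.tendsto_subseq (x := fun n => F^[φ n] x) (fun n => hxQ _)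
  obtain ⟨C3, hC3def⟩ : ∃ C3, C3 = C2 * (B^2 * b) := ⟨_, rfl⟩
  have hC3 : 0 < C3 := by rw [hC3def]; positivity
  obtain ⟨N, hN⟩ := Metric.cauchySeq_iff.mp hψlim.cauchySeq (δ1 / C3) (by positivity)
  have hd0 := hN (N+1) (by omega) N le_rfl
  obtain ⟨m, hmdef⟩ : ∃ m, m = φ (ψ N) := ⟨_, rfl⟩
  obtain ⟨p, hp1, hmp⟩ : ∃ p, 1 ≤ p ∧ φ (ψ (N+1)) = p + m := by
    have : φ (ψ N) < φ (ψ (N+1)) := hφ (hψ (Nat.lt_succ_self N))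
    exact ⟨φ (ψ (N+1)) - φ (ψ N), by omega, by omega⟩
  simp only [comp_apply, hmp, ← hmdef] at hd0
  have hPl : ∀ k, ‖u (m+k)‖ ≤ σ^k * ‖u m‖ := by
    intro k
    have := hφP (ψ N) (m+k) (by omega)
    rw [← hmdef, div_le_div_iff₀ (by positivity) (by positivity), pow_add] at this
    have h3 : 0 < σ^m := by positivity
    nlinarith
  -- the two orbits
  obtain ⟨xx, hxx⟩ : ∃ xx : ℕ → V, ∀ k, xx k = F^[m+k] x := ⟨_, fun _ => rfl⟩
  obtain ⟨yy, hyy⟩ : ∃ yy : ℕ → V, ∀ k, yy k = F^[p+m+k] x := ⟨_, fun _ => rfl⟩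
  have hxxQ : ∀ k, xx k ∈ Q := fun k => by rw [hxx]; exact hxQ _
  have hyyQ : ∀ k, yy k ∈ Q := fun k => by rw [hyy]; exact hxQ _
  have hxxF : ∀ k, xx (k+1) = F (xx k) := fun k => by
    rw [hxx, hxx, ← Function.iterate_succ_apply' F]; rfl
  have hyyF : ∀ k, yy (k+1) = F (yy k) := fun k => by
    rw [hyy, hyy, ← Function.iterate_succ_apply' F]; rfl
  have hyx : ∀ k, yy k = xx (k + p) := fun k => by
    rw [hyy, hxx, show p + m + k = m + (k + p) by omega]
  have hFmono : Monotone F := by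
    intro y z hyz
    have h1 := avgD_sub hG hd y z
    rcases eq_or_ne y z with rfl | hne'
    · exact le_rfl
    have h2 := avgD_pos hG he hsp y z (z-y) (sub_nonneg.mpr hyz) (sub_ne_zero.mpr hne'.symm)
    rw [h1] at h2
    exact sub_nonneg.mp (interior_subset h2)
  obtain ⟨d, hddef⟩ : ∃ d : ℕ → V, ∀ k, d k = yy k - xx k := ⟨_, fun _ => rfl⟩
  by_cases hcase : ∃ k, 0 ≤ d k ∨ d k ≤ 0
  · obtain ⟨k, hk⟩ := hcase
    have hs : ∀ j, F^[m + k + j * p] x = F^[j * p] (xx k) := fun j => by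
      rw [hxx, ← Function.iterate_add_apply, add_comm (m + k) (j * p)]
    have hs1 : ∀ j, F^[j * p] (yy k) = F^[(j+1) * p] (xx k) := fun j => by
      rw [hyx, hxx, hxx, ← Function.iterate_add_apply, ← Function.iterate_add_apply,
        show j * p + (m + (k + p)) = (j + 1) * p + (m + k) by ring]
    rcases hk with hk | hk
    · obtain ⟨q, hq⟩ := ac_monoconv hQ (s := fun j => F^[m + k + j * p] x) (fun j => hxQ _) (by
        apply monotone_nat_of_le_succ
        intro j
        rw [hs, hs, ← hs1]
        apply hFmono.iterate
        rw [hddef] at hk; exact sub_nonneg.mp hk)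
      exact ⟨m + k, p, q, hp1, hq⟩
    · obtain ⟨q, hq⟩ := ac_anticonv hQ (s := fun j => F^[m + k + j * p] x) (fun j => hxQ _) (by
        apply antitone_nat_of_succ_le
        intro j
        rw [hs, hs, ← hs1]
        apply hFmono.iterate
        rw [hddef] at hk; exact sub_nonpos.mp hk)
      exact ⟨m + k, p, q, hp1, hq⟩
  · push Not at hcase
    obtain ⟨T, hTdef⟩ : ∃ T : ℕ → V →L[ℝ] V, ∀ k, T k = avgD G (xx k) (yy k) := ⟨_, fun _ => rfl⟩
    have hTA : ∀ k, T k ∈ A := fun k => by rw [hTdef]; exact hmemA _ (hxxQ k) _ (hyyQ k)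
    have hdT : ∀ k, d (k+1) = T k (d k) := fun k => by
      rw [hddef, hddef, hTdef, avgD_sub hG hd, hxxF, hyyF]
    obtain ⟨w, hw0, hw⟩ : ∃ w : ℕ → V, w 0 = e ∧ ∀ k, w (k+1) = T k (w k) :=
      ⟨fun k => Nat.rec e (fun k v => T k v) k, rfl, fun _ => rfl⟩
    obtain ⟨l, hl0, hl⟩ : ∃ l : ℕ → V, l 0 = e ∧ ∀ k, l (k+1) = G (xx k) (l k) :=
      ⟨fun k => Nat.rec e (fun k v => G (xx k) v) k, rfl, fun _ => rfl⟩
    have hBw := hBQ T hTA w hw0 hw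
    have hlu : ∀ k, l k ≤ (B / ‖u m‖) • u (m+k) := by
      intro k
      induction k with
      | zero =>
        rw [hl0]
        have := smul_le_smul_of_nonneg_left (hBQu m) (inv_nonneg.mpr (hun m).le)
        rw [smul_smul, inv_mul_cancel₀ (hun m).ne', one_smul, smul_smul] at this
        refine this.trans_eq ?_
        rw [add_zero, mul_comm, div_eq_mul_inv]
      | succ k ih =>
        have := ac_mono (hsp (xx k)) ih
        rw [map_smul] at this
        rw [hl, ← add_assoc, hu, ← hxx]; exact this
    have hle : ∀ k, l k ≤ (B * b * σ^k) • e := by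
      intro k
      have hm0 := hun m
      calc l k ≤ (B / ‖u m‖) • u (m+k) := hlu k
        _ ≤ (B / ‖u m‖) • ((b * ‖u (m+k)‖) • e) := smul_le_smul_of_nonneg_left (hbu _) (by positivity)
        _ = (B / ‖u m‖ * (b * ‖u (m+k)‖)) • e := by rw [smul_smul]
        _ ≤ (B / ‖u m‖ * (b * (σ^k * ‖u m‖))) • e := by
          apply smul_le_smul_of_nonneg_right _ he0
          gcongr
          exact hPl k
        _ = _ := by congr 1; field_simp
    have hwl : ∀ k, (∀ j < k, ‖d j‖ ≤ δ1) → w k ≤ σ^k • l k := by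
      intro k
      induction k with
      | zero => intro _; rw [hw0, hl0]; simp
      | succ k ih =>
        intro h
        have h1 := ih (fun j hj => h j (by omega))
        have h2 := hcomp _ (hxxQ k) _ (hyyQ k) (by rw [← hddef]; exact h k (by omega)) _ (hBw k)
        rw [hw, hTdef]
        refine h2.trans ?_
        have h3 := ac_mono (hsp (xx k)) h1
        rw [map_smul, ← hl] at h3
        refine (smul_le_smul_of_nonneg_left h3 hσ0.le).trans_eq ?_
        rw [smul_smul, pow_succ, mul_comm]
    have hwn : ∀ k, (∀ j < k, ‖d j‖ ≤ δ1) → ‖w k‖ ≤ B^2 * b * (σ^2)^k := by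
      intro k h
      have h1 : ‖w k‖ • e ≤ (B^2 * b * (σ^2)^k) • e := by
        calc ‖w k‖ • e ≤ B • w k := hBw k
          _ ≤ B • (σ^k • ((B * b * σ^k) • e)) := by
            apply smul_le_smul_of_nonneg_left _ hB.le
            exact (hwl k h).trans (smul_le_smul_of_nonneg_left (hle k) (by positivity))
          _ = _ := by rw [smul_smul, smul_smul]; congr 1; rw [← pow_mul, mul_comm 2 k, pow_mul]; ring
      exact ac_le he0 hne h1
    have hdV := hV T hTA w hw0 hw d hdT (fun k => (hcase k).1) (fun k => (hcase k).2)
    have hd00 : C3 * ‖d 0‖ ≤ δ1 := by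
      rw [lt_div_iff₀ hC3, dist_eq_norm] at hd0
      rw [hddef, hxx, hyy]
      simp only [add_zero]
      linarith
    have hr0 : 0 < σ^2 * θ := by positivity
    have hdk : ∀ k, ‖d k‖ ≤ C3 * (σ^2 * θ)^k * ‖d 0‖ := by
      intro k
      induction k using Nat.strong_induction_on with
      | _ k ih =>
        have h1 : ∀ j < k, ‖d j‖ ≤ δ1 := by
          intro j hj
          refine (ih j hj).trans (le_trans ?_ hd00)
          have : (σ^2 * θ)^j ≤ 1 := pow_le_one₀ hr0.le hσθ.le
          have h5 : 0 ≤ C3 * ‖d 0‖ := by positivity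
          nlinarith
        calc ‖d k‖ ≤ C2 * θ^k * ‖w k‖ * ‖d 0‖ := hdV k
          _ ≤ C2 * θ^k * (B^2 * b * (σ^2)^k) * ‖d 0‖ := by
            gcongr
            exact hwn k h1
          _ = _ := by rw [hC3def, mul_pow]; ring
    have hcs : CauchySeq (fun j => xx (j * p)) := by
      apply cauchySeq_of_le_geometric ((σ^2 * θ)^p) (C3 * ‖d 0‖)
      · exact pow_lt_one₀ hr0.le hσθ (by omega)
      · intro j
        have h1 : xx ((j+1) * p) = yy (j * p) := by rw [hyx]; congr 1; ring
        rw [h1, dist_comm, dist_eq_norm, ← hddef]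
        refine (hdk _).trans_eq ?_
        rw [mul_comm j p, pow_mul]; ring
    obtain ⟨q, hq⟩ := cauchySeq_tendsto_of_complete hcs
    refine ⟨m, p, q, hp1, ?_⟩
    simpa only [hxx] using hq

end AbstractCone3

section AbstractCone4

set_option linter.unusedSectionVars false

lemma cyc_tendsto {V : Type*} [TopologicalSpace V] [T2Space V] {F : V → V} (hF : Continuous F)
    {x q : V} {m p : ℕ} (h : Tendsto (fun j => F^[m + j * p] x) atTop (𝓝 q)) :
    F^[p] q = q ∧ ∀ l, Tendsto (fun j => F^[m + l + j * p] x) atTop (𝓝 (F^[l] q)) := by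
  have h1 : ∀ l, Tendsto (fun j => F^[m + l + j * p] x) atTop (𝓝 (F^[l] q)) := by
    intro l
    have h2 := ((hF.iterate l).tendsto q).comp h
    refine h2.congr fun j => ?_
    simp only [comp_apply]
    rw [← Function.iterate_add_apply, show l + (m + j * p) = m + l + j * p by ring]
  refine ⟨?_, h1⟩
  have h2 := h.comp (tendsto_add_atTop_nat 1)
  refine tendsto_nhds_unique (h1 p) (h2.congr fun j => ?_)
  simp only [comp_apply]
  rw [show m + (j + 1) * p = m + p + j * p by ring]

lemma cyc_omega {V : Type*} [NormedAddCommGroup V] {F : V → V} (hF : Continuous F)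
    {x q : V} {m p : ℕ} (hp : 1 ≤ p) (h : Tendsto (fun j => F^[m + j * p] x) atTop (𝓝 q)) :
    omegaSet F x = semiOrbit F q := by
  obtain ⟨hq, ht⟩ := cyc_tendsto hF h
  have hmod : ∀ n, F^[n] q = F^[n % p] q := by
    intro n
    have hP : Function.IsPeriodicPt F p q := hq
    exact (hP.iterate_mod_apply n).symm
  apply Subset.antisymm
  · intro y hy
    by_contra hyS
    have hfin : (semiOrbit F q).Finite := by
      refine ((Set.finite_Iio p).image (fun n => F^[n] q)).subset ?_
      rintro _ ⟨n, rfl⟩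
      exact ⟨n % p, Nat.mod_lt _ (by omega), (hmod n).symm⟩
    obtain ⟨U, W, hU, hW, hSU, hyW, hdis⟩ :=
      hfin.isCompact.separation_of_notMem hyS
    have hev : ∀ l ∈ Finset.range p, ∀ᶠ j in atTop, F^[m + l + j * p] x ∈ U := fun l _ =>
      (ht l).eventually (hU.mem_nhds (hSU ⟨l, rfl⟩))
    rw [← Filter.eventually_all_finset] at hev
    obtain ⟨J, hJ⟩ := eventually_atTop.mp hev
    have hy1 := mem_iInter.mp hy (m + J * p)
    rw [mem_closure_iff] at hy1
    obtain ⟨w, hwW, n, rfl⟩ := hy1 W hW hyW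
    refine disjoint_left.mp hdis ?_ hwW
    rw [← Function.iterate_add_apply]
    have := hJ (J + n / p) (Nat.le_add_right _ _) (n % p) (Finset.mem_range.mpr (Nat.mod_lt _ (by omega)))
    rwa [show m + n % p + (J + n / p) * p = n + (m + J * p) by
      have := Nat.mod_add_div n p
      calc m + n % p + (J + n / p) * p = m + J * p + (n % p + p * (n / p)) := by ring
        _ = _ := by rw [this]; ring] at this
  · rintro _ ⟨l, rfl⟩
    refine mem_iInter.mpr fun k => ?_
    refine mem_closure_of_tendsto (ht l) ?_
    filter_upwards [eventually_ge_atTop k] with j hj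
    refine ⟨m + l + j * p - k, ?_⟩
    rw [← Function.iterate_add_apply]
    have : k ≤ j * p := hj.trans (Nat.le_mul_of_pos_right j (by omega))
    rw [Nat.sub_add_cancel (by omega)]

lemma cyc_min {V : Type*} [NormedAddCommGroup V] {F : V → V} {q : V} {p : ℕ} (hp : 1 ≤ p)
    (hq : F^[p] q = q) : ∃ p', IsMinPeriodicPt F p' q := by
  classical
  have hex : ∃ n, 1 ≤ n ∧ F^[n] q = q := ⟨p, hp, hq⟩
  refine ⟨Nat.find hex, (Nat.find_spec hex).1, (Nat.find_spec hex).2, fun l hl1 hl2 hl3 => ?_⟩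
  exact Nat.find_min hex hl2 ⟨hl1, hl3⟩

/-- The derivative of the `n`-th iterate. -/
noncomputable def itD {V : Type*} [NormedAddCommGroup V] [NormedSpace ℝ V] (F : V → V)
    (G : V → V →L[ℝ] V) : ℕ → V → V →L[ℝ] V
  | 0, _ => ContinuousLinearMap.id ℝ V
  | n+1, x => (G (F^[n] x)).comp (itD F G n x)

variable {V : Type*} [NormedAddCommGroup V] [NormedSpace ℝ V]

lemma itD_zero (F : V → V) (G : V → V →L[ℝ] V) (x : V) : itD F G 0 x = ContinuousLinearMap.id ℝ V :=
  rfl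

lemma itD_succ (F : V → V) (G : V → V →L[ℝ] V) (n : ℕ) (x : V) :
    itD F G (n+1) x = (G (F^[n] x)).comp (itD F G n x) := rfl

lemma itD_deriv {F : V → V} {G : V → V →L[ℝ] V} (hd : ∀ x, HasFDerivAt F (G x) x) (n : ℕ) (x : V) :
    HasFDerivAt (F^[n]) (itD F G n x) x := by
  induction n with
  | zero => exact hasFDerivAt_id x
  | succ n ih =>
    rw [itD_succ, Function.iterate_succ']
    exact (hd _).comp x ih

lemma itD_add (F : V → V) (G : V → V →L[ℝ] V) (n k : ℕ) (x v : V) :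
    itD F G (k + n) x v = itD F G n (F^[k] x) (itD F G k x v) := by
  induction n with
  | zero => rfl
  | succ n ih =>
    rw [← add_assoc, itD_succ, itD_succ, ContinuousLinearMap.comp_apply,
      ContinuousLinearMap.comp_apply, ih, ← Function.iterate_add_apply, add_comm n k]

lemma itD_cont {F : V → V} {G : V → V →L[ℝ] V} (hF : Continuous F) (hG : Continuous G) (n : ℕ) :
    Continuous (itD F G n) := by
  induction n with
  | zero => exact continuous_const
  | succ n ih => exact (hG.comp (hF.iterate n)).clm_comp ih

lemma itD_compact {F : V → V} {G : V → V →L[ℝ] V} (hco : ∀ x, IsCompactOperator (G x)) {n : ℕ}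
    (hn : 1 ≤ n) (x : V) : IsCompactOperator (itD F G n x) := by
  obtain ⟨n, rfl⟩ : ∃ k, n = k + 1 := ⟨n - 1, by omega⟩
  rw [itD_succ]
  exact (hco _).comp_clm _

variable [PartialOrder V]
  [IsOrderedAddMonoid V] [IsOrderedModule ℝ V] [OrderClosedTopology V]

lemma itD_mono {F : V → V} {G : V → V →L[ℝ] V}
    (hsp : ∀ x v, 0 ≤ v → v ≠ 0 → G x v ∈ interior (Ici (0:V))) (n : ℕ) (x : V) {y z : V}
    (h : y ≤ z) : itD F G n x y ≤ itD F G n x z := by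
  induction n with
  | zero => exact h
  | succ n ih => exact ac_mono (hsp _) ih

lemma itD_int {F : V → V} {G : V → V →L[ℝ] V} {e : V} (he : e ∈ interior (Ici (0:V))) (hne : e ≠ 0)
    (hsp : ∀ x v, 0 ≤ v → v ≠ 0 → G x v ∈ interior (Ici (0:V))) (n : ℕ) (x : V) :
    itD F G n x e ∈ interior (Ici (0:V)) := by
  induction n with
  | zero => exact he
  | succ n ih =>
    exact hsp _ _ (interior_subset ih) (ac_int_ne (interior_subset he) hne ih)

lemma exp_grow {c C : ℝ} (hc : 0 < c) (k N : ℕ)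
    (h : ∀ s : ℕ, c * 2^s ≤ C * (((k + s * N : ℕ) : ℝ) + 1)^2) : False := by
  have hC : 0 < C := by
    have := h 0
    by_contra hC
    push Not at hC
    have h2 : C * (((k + 0 * N : ℕ) : ℝ) + 1)^2 ≤ 0 := mul_nonpos_of_nonpos_of_nonneg hC (by positivity)
    simp only [pow_zero, mul_one] at this
    linarith
  have h1 := (tendsto_pow_const_div_const_pow_of_one_lt 2 (one_lt_two (α := ℝ)))
  have hp : 0 < c / (C * ((k:ℝ) + N + 1)^2) := by positivity
  obtain ⟨s, hs, hs1⟩ := ((h1.eventually_lt_const hp).and (eventually_ge_atTop 1)).exists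
  rw [div_lt_div_iff₀ (by positivity) (by positivity)] at hs
  have h2 := h s
  have h3 : ((k + s * N : ℕ) : ℝ) + 1 ≤ (s:ℝ) * ((k:ℝ) + N + 1) := by
    push_cast
    have : (1:ℝ) ≤ s := by exact_mod_cast hs1
    have hk : (0:ℝ) ≤ k := by positivity
    nlinarith
  have h4 : (((k + s * N : ℕ) : ℝ) + 1)^2 ≤ ((s:ℝ) * ((k:ℝ) + N + 1))^2 := by gcongr
  have h5 := mul_le_mul_of_nonneg_left h4 hC.le
  rw [mul_pow] at h5
  linarith

lemma lin_stable [CompleteSpace V] {e : V} (he : e ∈ interior (Ici (0:V))) (hne : e ≠ 0)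
    {F : V → V} {G : V → V →L[ℝ] V} (hF : Continuous F) (hG : Continuous G)
    (hco : ∀ x, IsCompactOperator (G x))
    (hsp : ∀ x v, 0 ≤ v → v ≠ 0 → G x v ∈ interior (Ici (0:V)))
    {x z : V} {C : ℝ} (hC : ∀ n : ℕ, ‖itD F G n x e‖ ≤ C * ((n:ℝ)+1)^2)
    {p p' k0 : ℕ} (hp : 1 ≤ p) (hp' : 1 ≤ p') (hz' : F^[p'] z = z)
    (ht : Tendsto (fun j => F^[k0 + j * p] x) atTop (𝓝 z)) :
    spectralRadius ℝ (itD F G p' z) ≤ 1 := by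
  have he0 : 0 ≤ e := interior_subset he
  refine iSup₂_le fun lam hlam => ?_
  by_contra hcon
  have hl1 : 1 < ‖lam‖ := by
    have : (1 : NNReal) < ‖lam‖₊ := by exact_mod_cast not_le.mp hcon
    exact_mod_cast this
  have hl0 : lam ≠ 0 := by rintro rfl; norm_num at hl1
  have hl0' : 0 < ‖lam‖ := norm_pos_iff.mpr hl0
  obtain ⟨v, hv⟩ := ((IsCompactOperator.hasEigenvalue_iff_mem_spectrum
    (itD_compact hco hp' z) hl0).mpr hlam).exists_hasEigenvector
  have hv0 : v ≠ 0 := hv.2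
  have hvl : itD F G p' z v = lam • v := hv.apply_eq_smul
  have hper : ∀ i, F^[i * p'] z = z := fun i => by
    have hP : Function.IsPeriodicPt F p' z := hz'
    exact hP.const_mul i
  have hvi : ∀ i, itD F G (i * p') z v = lam^i • v := by
    intro i
    induction i with
    | zero => simp [itD_zero]
    | succ i ih =>
      rw [add_mul, one_mul, itD_add, hper, ih, map_smul, hvl, smul_smul, pow_succ]
  -- the cycle of z is finite
  obtain ⟨B, hB, hBQ⟩ := ac_U he hne (A := (fun n => G (F^[n] z)) '' Iio p')
    ((Set.finite_Iio p').image _).isCompact (by rintro _ ⟨n, _, rfl⟩; exact hco _)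
    (by rintro _ ⟨n, _, rfl⟩; exact hsp _)
  have hBz := hBQ (fun n => G (F^[n] z)) (fun n => by
      refine ⟨n % p', Nat.mod_lt _ (by omega), ?_⟩
      have hP : Function.IsPeriodicPt F p' z := hz'
      simp only [hP.iterate_mod_apply n]) (fun n => itD F G n z e) rfl (fun n => rfl)
  obtain ⟨b, hb, hbu⟩ := ac_unit he
  obtain ⟨c, hc, hcv⟩ := ac_away e (S := {v}) isCompact_singleton (by simpa using hv0.symm) he0
  have hnv : 0 < ‖v‖ := norm_pos_iff.mpr hv0
  have hgrow : ∀ i, c * ‖lam‖^i ≤ b * ‖v‖ * b * ‖itD F G (i * p') z e‖ := by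
    intro i
    have key : ∀ w : V, ‖w‖ = ‖v‖ → itD F G (i * p') z w ≤
        (b * ‖v‖ * b * ‖itD F G (i * p') z e‖) • e := by
      intro w hw
      have h1 := itD_mono (F := F) hsp (i * p') z (hbu w)
      rw [map_smul, hw] at h1
      refine h1.trans ?_
      have h2 := smul_le_smul_of_nonneg_left (hbu (itD F G (i * p') z e)) (a := b * ‖v‖) (by positivity)
      rwa [smul_smul, ← mul_assoc] at h2
    have k1 := key v rfl
    have k2 := key (-v) (norm_neg v)
    rw [map_neg, hvi] at k2
    rw [hvi] at k1
    set β := b * ‖v‖ * b * ‖itD F G (i * p') z e‖ with hβ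
    have hli : lam^i ≠ 0 := pow_ne_zero _ hl0
    have hpos : 0 < ‖lam‖^i := by positivity
    have k3 : |lam^i| • v ≤ β • e ∧ -(|lam^i| • v) ≤ β • e := by
      rcases abs_choice (lam^i) with h | h <;> rw [h]
      · exact ⟨k1, k2⟩
      · rw [neg_smul, neg_neg]; exact ⟨k2, k1⟩
    have hab : |lam^i| = ‖lam‖^i := by rw [abs_pow, Real.norm_eq_abs]
    rw [hab] at k3
    have k4 := smul_le_smul_of_nonneg_left k3.1 (inv_nonneg.mpr hpos.le)
    have k5 := smul_le_smul_of_nonneg_left k3.2 (inv_nonneg.mpr hpos.le)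
    rw [smul_neg] at k5
    rw [smul_smul, inv_mul_cancel₀ hpos.ne', one_smul, smul_smul] at k4 k5
    have := hcv v rfl _ (neg_le.mp k5) k4
    rw [inv_mul_eq_div, le_div_iff₀ hpos] at this
    exact this
  obtain ⟨s, hs1, hs⟩ : ∃ s, 1 ≤ s ∧ 3 * (B * (b * ‖v‖ * b)) / c ≤ ‖lam‖^s := by
    have := (tendsto_pow_atTop_atTop_of_one_lt hl1).eventually_ge_atTop (3 * (B * (b * ‖v‖ * b)) / c)
    exact ((eventually_ge_atTop 1).and this).exists
  obtain ⟨N, hN⟩ : ∃ N, N = (s * p) * p' := ⟨_, rfl⟩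
  have h3e : (3:ℝ) • e ≤ itD F G N z e := by
    have h1 := hBz N
    have h2 := hgrow (s * p)
    have h3 : ‖lam‖^s ≤ ‖lam‖^(s*p) := pow_le_pow_right₀ hl1.le (Nat.le_mul_of_pos_right s (by omega))
    rw [← hN] at h2
    rw [div_le_iff₀ hc] at hs
    have h4 : 3 * B ≤ ‖itD F G N z e‖ := by
      have h5 : 3 * B * (b * ‖v‖ * b) ≤ ‖itD F G N z e‖ * (b * ‖v‖ * b) := by nlinarith
      exact le_of_mul_le_mul_right h5 (by positivity)
    have h6 := (smul_le_smul_of_nonneg_right h4 he0).trans h1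
    have h7 := smul_le_smul_of_nonneg_left h6 (inv_nonneg.mpr hB.le)
    rw [smul_smul, smul_smul, inv_mul_cancel₀ hB.ne', one_smul] at h7
    rwa [show B⁻¹ * (3 * B) = 3 by field_simp] at h7
  have hint : itD F G N z e - (2:ℝ) • e ∈ interior (Ici (0:V)) := by
    refine ac_int_up he ?_
    rw [le_sub_iff_add_le]
    refine le_trans (le_of_eq ?_) h3e
    rw [show (3:ℝ) = 1 + 2 by norm_num, add_smul, one_smul]
  have hcontN : Continuous (fun y => itD F G N y e - (2:ℝ) • e) := by
    have := itD_cont hF hG N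
    fun_prop
  have hev := ht.eventually ((hcontN.tendsto z).eventually (isOpen_interior.mem_nhds hint))
  obtain ⟨J, hJ⟩ := eventually_atTop.mp hev
  obtain ⟨k1, hk1⟩ : ∃ k1, k1 = k0 + J * p := ⟨_, rfl⟩
  have hstep : ∀ i, (2:ℝ) • e ≤ itD F G N (F^[k1 + i * N] x) e := by
    intro i
    have := interior_subset (hJ (J + i * (s * p')) (by omega))
    rw [show k0 + (J + i * (s * p')) * p = k1 + i * N by rw [hk1, hN]; ring] at this
    exact sub_nonneg.mp this
  obtain ⟨c1, hc1, hc1u⟩ := ac_cpt e (S := {itD F G k1 x e}) isCompact_singleton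
    (by simpa using itD_int he hne hsp k1 x)
  have hind : ∀ i : ℕ, (c1 * 2^i) • e ≤ itD F G (k1 + i * N) x e := by
    intro i
    induction i with
    | zero => simpa using hc1u _ rfl
    | succ i ih =>
      rw [show k1 + (i+1) * N = (k1 + i * N) + N by ring, itD_add]
      have h1 := itD_mono (F := F) hsp N (F^[k1 + i * N] x) ih
      rw [map_smul] at h1
      refine le_trans ?_ h1
      have h2 := smul_le_smul_of_nonneg_left (hstep i) (a := c1 * 2^i) (by positivity)
      rw [smul_smul] at h2
      refine le_trans (le_of_eq ?_) h2
      rw [pow_succ]; ring_nf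
  refine exp_grow (c := c1) (C := b * C) hc1 k1 N fun i => ?_
  have h1 := ac_le he0 hne ((hind i).trans (hbu _))
  refine h1.trans ?_
  rw [mul_assoc]
  exact mul_le_mul_of_nonneg_left (hC _) hb.le

lemma stable_main [CompleteSpace V] {e : V} (he : e ∈ interior (Ici (0:V))) (hne : e ≠ 0)
    {F : V → V} {G : V → V →L[ℝ] V} (hF : Continuous F) (hG : Continuous G)
    (hd : ∀ x, HasFDerivAt F (G x) x) (hco : ∀ x, IsCompactOperator (G x))
    (hsp : ∀ x v, 0 ≤ v → v ≠ 0 → G x v ∈ interior (Ici (0:V)))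
    {x : V} {Q : Set V} (hQ : IsCompact Q) (hxQ : ∀ n, F^[n] x ∈ Q)
    {C : ℝ} (hC : ∀ n : ℕ, ‖itD F G n x e‖ ≤ C * ((n:ℝ)+1)^2) :
    IsLinearlyStableCycle F (omegaSet F x) := by
  obtain ⟨m, p, q, hp, ht⟩ := orb_conv he hne hG hd hco hsp hQ hxQ
    (u := fun n => itD F G n x e) rfl (fun n => rfl) hC
  obtain ⟨hq, hl⟩ := cyc_tendsto hF ht
  obtain ⟨p', hp'⟩ := cyc_min hp hq
  refine ⟨q, p', hp', cyc_omega hF hp ht, ?_⟩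
  rintro _ ⟨l, rfl⟩
  refine ⟨itD F G p' (F^[l] q), itD_deriv hd _ _, ?_⟩
  refine lin_stable he hne hF hG hco hsp hC hp hp'.1 ?_ (hl l)
  rw [← Function.iterate_add_apply, add_comm, Function.iterate_add_apply, hp'.2.1]

end AbstractCone4

section AbstractCone5

set_option linter.unusedSectionVars false

lemma null_slice {V : Type*} [NormedAddCommGroup V] [NormedSpace ℝ V]
    {F : V → V} {G : V → V →L[ℝ] V} (hF : Continuous F) (hG : Continuous G)
    (hd : ∀ x, HasFDerivAt F (G x) x) (e x : V) (φ : V →L[ℝ] ℝ)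
    (hpos : ∀ n y, 0 ≤ φ (itD F G n y e)) {a b : ℝ} (hab : a ≤ b) {R : ℝ}
    (ha : ∀ n, ‖F^[n] (a • e - x)‖ ≤ R) (hb : ∀ n, ‖F^[n] (b • e - x)‖ ≤ R) :
    volume {t ∈ Ioc a b | ∑' n : ℕ, ENNReal.ofReal (φ (itD F G n (t • e - x) e) / ((n:ℝ)+1)^2) = ⊤}
      = 0 := by
  have hcont : ∀ n : ℕ, Continuous (fun t : ℝ => φ (itD F G n (t • e - x) e)) := by
    intro n
    have := itD_cont hF hG n
    fun_prop
  have hint : ∀ n : ℕ, ∫⁻ t in Ioc a b, ENNReal.ofReal (φ (itD F G n (t • e - x) e) / ((n:ℝ)+1)^2)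
      ≤ ENNReal.ofReal (2 * (‖φ‖ * R) / ((n:ℝ)+1)^2) := by
    intro n
    have hder : ∀ t ∈ uIcc a b, HasDerivAt (fun t : ℝ => φ (F^[n] (t • e - x)))
        (φ (itD F G n (t • e - x) e)) t := by
      intro t _
      have h1 : HasDerivAt (fun t : ℝ => t • e - x) e t := by
        simpa using ((hasDerivAt_id t).smul_const e).sub_const x
      have h2 := (itD_deriv hd n (t • e - x)).comp_hasDerivAt t h1
      exact φ.hasFDerivAt.comp_hasDerivAt t h2
    have hI := intervalIntegral.integral_eq_sub_of_hasDerivAt hder ((hcont n).intervalIntegrable a b)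
    rw [intervalIntegral.integral_of_le hab] at hI
    rw [← ofReal_integral_eq_lintegral_ofReal]
    · apply ENNReal.ofReal_le_ofReal
      rw [integral_div, hI]
      gcongr
      have h1 := (le_abs_self _).trans (φ.le_opNorm (F^[n] (b • e - x)))
      have h2 := (neg_abs_le (φ (F^[n] (a • e - x))))
      have h3 := φ.le_opNorm (F^[n] (a • e - x))
      have h4 := mul_le_mul_of_nonneg_left (ha n) (norm_nonneg φ)
      have h5 := mul_le_mul_of_nonneg_left (hb n) (norm_nonneg φ)
      rw [Real.norm_eq_abs] at h3
      linarith
    · exact (((hcont n).div_const _).integrableOn_Icc (a := a) (b := b)).mono_set Ioc_subset_Icc_self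
    · exact Eventually.of_forall fun t => div_nonneg (hpos _ _) (by positivity)
  have hmeas : ∀ n : ℕ, Measurable
      (fun t : ℝ => ENNReal.ofReal (φ (itD F G n (t • e - x) e) / ((n:ℝ)+1)^2)) := fun n =>
    ENNReal.measurable_ofReal.comp ((hcont n).div_const _).measurable
  have hfin : ∫⁻ t in Ioc a b,
      ∑' n : ℕ, ENNReal.ofReal (φ (itD F G n (t • e - x) e) / ((n:ℝ)+1)^2) ≠ ⊤ := by
    rw [lintegral_tsum (fun n => (hmeas n).aemeasurable)]
    refine ne_top_of_le_ne_top ?_ (ENNReal.tsum_le_tsum hint)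
    have hsum : Summable (fun n : ℕ => 2 * (‖φ‖ * R) / ((n:ℝ)+1)^2) := by
      have h1 := (summable_nat_add_iff 1).mpr (Real.summable_one_div_nat_pow.mpr one_lt_two)
      have h2 := h1.mul_left (2 * (‖φ‖ * R))
      refine h2.congr fun n => ?_
      push_cast
      rw [mul_one_div]
    exact hsum.tsum_ofReal_ne_top
  have hae := ae_lt_top (Measurable.ennreal_tsum hmeas) hfin
  rw [ae_restrict_iff' measurableSet_Ioc, ae_iff] at hae
  refine measure_mono_null ?_ hae
  rintro t ⟨ht, ht2⟩
  simp only [mem_ofPred_eq]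
  intro h
  have := h ht
  rw [ht2] at this
  exact lt_irrefl _ this

lemma exists_func {V : Type*} [NormedAddCommGroup V] [NormedSpace ℝ V] [PartialOrder V]
    [IsOrderedAddMonoid V] [IsOrderedModule ℝ V] [OrderClosedTopology V]
    {e : V} (he : e ∈ interior (Ici (0:V))) (hne : e ≠ 0) :
    ∃ φ : V →L[ℝ] ℝ, 0 < φ e ∧ ∀ v, 0 ≤ v → 0 ≤ φ v := by
  have he0 : 0 ≤ e := interior_subset he
  obtain ⟨f, hf⟩ := geometric_hahn_banach_open_point (s := interior (Ici (0:V)))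
    (convex_Ici (0:V)).interior isOpen_interior (x := 0)
    (fun h => ac_int_ne he0 hne h rfl)
  simp only [map_zero] at hf
  refine ⟨-f, by simpa using hf e he, fun v hv => ?_⟩
  by_contra hcon
  simp only [neg_apply, not_le, Left.neg_neg_iff] at hcon
  have h1 : e + (-(f e) / f v) • v ∈ interior (Ici (0:V)) := by
    apply ac_int_up he
    have := hf e he
    have h2 : 0 ≤ -(f e) / f v := div_nonneg (by linarith) hcon.le
    simpa using smul_nonneg h2 hv
  have h2 := hf _ h1
  rw [map_add, map_smul, smul_eq_mul, div_mul_cancel₀ _ hcon.ne'] at h2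
  linarith

lemma main_abs {V : Type*} [NormedAddCommGroup V] [NormedSpace ℝ V] [MeasurableSpace V]
    [BorelSpace V] [PartialOrder V]
    [IsOrderedAddMonoid V] [IsOrderedModule ℝ V] [OrderClosedTopology V] [CompleteSpace V]
    {e : V} (he : e ∈ interior (Ici (0:V))) (hne : e ≠ 0)
    {F : V → V} {G : V → V →L[ℝ] V} (hF : Continuous F) (hG : Continuous G)
    (hd : ∀ x, HasFDerivAt F (G x) x) (hco : ∀ x, IsCompactOperator (G x))
    (hsp : ∀ x v, 0 ≤ v → v ≠ 0 → G x v ∈ interior (Ici (0:V)))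
    {X : Set V} (hX : IsOpen X) (hcpt : ∀ x ∈ X, IsCompact (closure (semiOrbit F x))) :
    PrevalentIn {x ∈ X | IsLinearlyStableCycle F (omegaSet F x)} X := by
  have he0 : 0 ≤ e := interior_subset he
  obtain ⟨φ, hφe, hφ⟩ := exists_func he hne
  have hpos : ∀ n y, 0 ≤ φ (itD F G n y e) := fun n y =>
    hφ _ (interior_subset (itD_int he hne hsp n y))
  have hcont : ∀ n : ℕ, Continuous (fun y : V => φ (itD F G n y e)) := by
    intro n
    have := itD_cont hF hG n
    fun_prop
  obtain ⟨S, hS⟩ : ∃ S : V → ENNReal, ∀ y, S y =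
    ∑' n : ℕ, ENNReal.ofReal (φ (itD F G n y e) / ((n:ℝ)+1)^2) := ⟨_, fun _ => rfl⟩
  have hSm : Measurable S := by
    rw [show S = fun y => ∑' n : ℕ, ENNReal.ofReal (φ (itD F G n y e) / ((n:ℝ)+1)^2) from funext hS]
    exact Measurable.ennreal_tsum fun n =>
      ENNReal.measurable_ofReal.comp ((hcont n).div_const _).measurable
  refine ⟨X ∩ S ⁻¹' {⊤}, ?_, hX.measurableSet.inter (hSm (measurableSet_singleton _)), ?_⟩
  · rintro x ⟨hxX, hx⟩
    refine ⟨hxX, ?_⟩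
    by_contra hfin
    refine hx ⟨hxX, ?_⟩
    have hfin : S x ≠ ⊤ := hfin
    have hQ := hcpt x hxX
    have hxQ : ∀ n, F^[n] x ∈ closure (semiOrbit F x) := fun n => subset_closure ⟨n, rfl⟩
    obtain ⟨B, hB, hBQ⟩ := ac_U he hne (A := G '' closure (semiOrbit F x)) (hQ.image hG)
      (by rintro _ ⟨y, _, rfl⟩; exact hco _) (by rintro _ ⟨y, _, rfl⟩; exact hsp _)
    have hBx := hBQ (fun n => G (F^[n] x)) (fun n => ⟨_, hxQ n, rfl⟩)
      (fun n => itD F G n x e) rfl (fun n => rfl)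
    refine stable_main he hne hF hG hd hco hsp hQ hxQ (C := B * (S x).toReal / φ e) fun n => ?_
    have h1 : ENNReal.ofReal (φ (itD F G n x e) / ((n:ℝ)+1)^2) ≤ S x := by
      rw [hS]; exact ENNReal.le_tsum n
    rw [ENNReal.ofReal_le_iff_le_toReal hfin, div_le_iff₀ (by positivity)] at h1
    have h2 := hφ _ (sub_nonneg.mpr (hBx n))
    rw [map_sub, map_smul, map_smul, smul_eq_mul, smul_eq_mul] at h2
    rw [div_mul_eq_mul_div, le_div_iff₀ hφe]
    have h3 := mul_le_mul_of_nonneg_left h1 hB.le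
    linarith
  · have hγ : Continuous (fun t : ℝ => t • e) := by fun_prop
    refine ⟨(volume.restrict (Icc (0:ℝ) 1)).map (fun t : ℝ => t • e), ?_,
      ⟨(fun t : ℝ => t • e) '' Icc 0 1, isCompact_Icc.image hγ, ?_⟩, fun x => ?_⟩
    · intro h0
      have := congrArg (fun μ : Measure V => μ univ) h0
      simp [Measure.map_apply hγ.measurable MeasurableSet.univ] at this
    · rw [Measure.map_apply hγ.measurable (isCompact_Icc.image hγ).isClosed.measurableSet.compl,
        Measure.restrict_apply ((isCompact_Icc.image hγ).isClosed.measurableSet.compl.preimage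
          hγ.measurable)]
      convert measure_empty (μ := (volume : Measure ℝ))
      ext t
      simp only [mem_inter_iff, mem_preimage, mem_compl_iff, mem_empty_iff_false, iff_false, not_and]
      intro h1 h2
      exact h1 ⟨t, h2, rfl⟩
    · have hWm : MeasurableSet ((fun y : V => y - x) ⁻¹' (X ∩ S ⁻¹' {⊤})) :=
        (hX.measurableSet.inter (hSm (measurableSet_singleton _))).preimage
          (continuous_id.sub continuous_const).measurable
      rw [Measure.map_apply hγ.measurable hWm]
      refine Measure.absolutelyContinuous_of_le Measure.restrict_le_self ?_
      apply measure_null_of_locally_null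
      intro t ht
      have htX : t • e - x ∈ X := ht.1
      have hO : IsOpen {t : ℝ | t • e - x ∈ X} := hX.preimage (by fun_prop)
      obtain ⟨r, hr, hball⟩ := Metric.isOpen_iff.mp hO t htX
      have haX : (t - r/2) • e - x ∈ X := hball (by
        rw [Metric.mem_ball, Real.dist_eq, abs_lt]; constructor <;> linarith)
      have hbX : (t + r/2) • e - x ∈ X := hball (by
        rw [Metric.mem_ball, Real.dist_eq, abs_lt]; constructor <;> linarith)
      obtain ⟨R1, hR1⟩ := (hcpt _ haX).isBounded.exists_norm_le
      obtain ⟨R2, hR2⟩ := (hcpt _ hbX).isBounded.exists_norm_le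
      refine ⟨_, ?_, null_slice hF hG hd e x φ hpos (show t - r/2 ≤ t + r/2 by linarith)
        (R := max R1 R2) (fun n => (hR1 _ (subset_closure ⟨n, rfl⟩)).trans (le_max_left _ _))
        (fun n => (hR2 _ (subset_closure ⟨n, rfl⟩)).trans (le_max_right _ _))⟩
      rw [mem_nhdsWithin_iff_exists_mem_nhds_inter]
      refine ⟨Ioc (t - r/2) (t + r/2), Ioc_mem_nhds (by linarith) (by linarith), ?_⟩
      rintro s ⟨hs1, hs2⟩
      refine ⟨hs1, ?_⟩
      have : S (s • e - x) = ⊤ := hs2.2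
      rwa [hS] at this

end AbstractCone5

/-- Theorem A: under (H1)–(H3), the set of `x ∈ X` whose ω-limit set is a linearly
stable cycle is prevalent in `X`. -/
theorem theoremA [CompleteSpace E] [TopologicalSpace.SeparableSpace E]
    (K : Set E) (F : E → E) (X : Set E)
    -- (H1)
    (hK : IsConeOrder K) (hKint : (interior K).Nonempty)
    (hFc : Continuous F) (hFm : StronglyMonotoneMap K F)
    -- (H2)
    (hXopen : IsOpen X) (hXoc : OrderConvexSet K X) (hXinv : Set.MapsTo F X X)
    (hωc : OmegaCompactIntervals K F X)
    -- (H3)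
    (hH3 : SmoothStronglyPositive K F) :
    PrevalentIn {x ∈ X | IsLinearlyStableCycle F (omegaSet F x)} X := by
  obtain ⟨hKc, -, hKs, hKa, hK0⟩ := hK
  have h0K : (0:E) ∈ K := by
    have : (0:E) ∈ K ∩ (-K) := by rw [hK0]; rfl
    exact this.1
  obtain ⟨e, he⟩ := hKint
  rcases subsingleton_or_nontrivial E with hsub | hnt
  · -- trivial space
    have hall : {x ∈ X | IsLinearlyStableCycle F (omegaSet F x)} = X := by
      ext x
      refine ⟨fun h => h.1, fun h => ⟨h, x, 1, ⟨le_rfl, Subsingleton.elim _ _, by omega⟩, ?_, ?_⟩⟩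
      · ext y
        refine ⟨fun _ => ⟨0, Subsingleton.elim _ _⟩, fun _ => mem_iInter.mpr fun k => ?_⟩
        exact subset_closure ⟨0, Subsingleton.elim _ _⟩
      · intro z _
        refine ⟨0, ?_, ?_⟩
        · exact hasFDerivAt_of_subsingleton _ _
        · refine iSup₂_le fun k hk => ?_
          exact absurd (isUnit_of_subsingleton _) hk
    rw [PrevalentIn, hall, sdiff_self]
    refine ⟨∅, le_rfl, MeasurableSet.empty, Measure.dirac 0, ?_, ⟨{0}, isCompact_singleton, ?_⟩, ?_⟩
    · exact (NeZero.ne (Measure.dirac (0:E)))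
    · rw [Measure.dirac_apply' _ (measurableSet_singleton _).compl]; simp
    · simp
  letI : PartialOrder E :=
    { le := fun x y => y - x ∈ K
      le_refl := fun x => by simpa using h0K
      le_trans := fun x y z hxy hyz => by
        have := hKa _ hxy _ hyz
        simpa using this
      le_antisymm := fun x y hxy hyx => by
        have : y - x ∈ K ∩ (-K) := ⟨hxy, by rw [Set.mem_neg, neg_sub]; exact hyx⟩
        rw [hK0] at this
        exact (sub_eq_zero.mp this).symm }
  have hle : ∀ x y : E, x ≤ y ↔ y - x ∈ K := fun x y => Iff.rfl
  haveI : IsOrderedAddMonoid E :=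
    { add_le_add_left := fun x y h z => by
        rw [hle] at h ⊢; simpa using h }
  have hsm : ∀ (a : ℝ) (v : E), 0 ≤ a → v ∈ K → a • v ∈ K := by
    intro a v ha hv
    rcases ha.eq_or_lt with rfl | ha
    · simpa using h0K
    · exact hKs v hv a ha
  haveI : IsOrderedModule ℝ E :=
    { smul_le_smul_of_nonneg_left := fun a ha x y h => by
        rw [hle] at h ⊢
        rw [← smul_sub]; exact hsm _ _ ha h
      smul_le_smul_of_nonneg_right := fun v hv a b h => by
        rw [hle] at hv ⊢
        rw [← sub_smul]
        rw [sub_zero] at hv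
        exact hsm _ _ (sub_nonneg.mpr h) hv }
  haveI : OrderClosedTopology E :=
    ⟨hKc.preimage (continuous_snd.sub continuous_fst)⟩
  have hIci : Ici (0:E) = K := by
    ext v; rw [mem_Ici, hle, sub_zero]
  rw [← hIci] at he
  have hne : e ≠ 0 := by
    rintro rfl
    obtain ⟨b, hb, hbu⟩ := ac_unit he
    obtain ⟨v, hv⟩ := exists_ne (0:E)
    apply hv
    apply le_antisymm
    · simpa using hbu v
    · simpa using hbu (-v)
  obtain ⟨G, hG, hd, hco, hsp⟩ := hH3
  refine main_abs he hne hFc hG hd hco ?_ hXopen ?_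
  · intro x v hv hv0
    have := hsp x v ⟨hv, hv0.symm⟩
    rw [coneLL, sub_zero, ← hIci] at this
    exact this
  · intro x hx
    have hxx : coneLE K x x := by rw [coneLE, sub_self]; exact h0K
    exact ((hωc x hx x hx hxx).1 x ⟨hxx, hxx⟩).1
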